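/- arXiv:2509.10211 — 7 statements merged into one kernel-verified Lean document; each statement's English description precedes it below -/
import Mathlib

section
/- Let d ≥ 1 be an integer and α ∈ (0,1). Let g : (0,1] → ℝ be continuous with lim_{r→0⁺} r^{2−2α} g(r) = 0, and suppose that the limit L := lim_{r→0⁺} ( g(r) − (d+2α) r^{−d−2} ∫₀^r u^{d+1} g(u) du ) exists in ℝ. Then lim_{r→0⁺} r^{−d−2} ∫₀^r u^{d+1} g(u) du = L / (2(1−α)) and lim_{r→0⁺} g(r) = (d+2) L / (2(1−α)). -/
open MeasureTheory Filter

/-- Identification-of-limits lemma (scalar form): if `g` is continuous on `(0,1]` with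
`r^{2−2α} g(r) → 0` as `r → 0⁺`, and
`g(r) − (d+2α) r^{−d−2} ∫₀^r u^{d+1} g(u) du → L`, then
`r^{−d−2} ∫₀^r u^{d+1} g(u) du → L/(2(1−α))` and `g(r) → (d+2)L/(2(1−α))`. -/
theorem identification_of_limits (d : ℕ) (hd : 1 ≤ d) (α : ℝ) (hα : α ∈ Set.Ioo (0:ℝ) 1)
    (g : ℝ → ℝ) (hg : ContinuousOn g (Set.Ioc 0 1))
    (h0 : Tendsto (fun r : ℝ => r ^ (2 - 2*α) * g r) (nhdsWithin 0 (Set.Ioi 0)) (nhds 0))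
    (L : ℝ)
    (hL : Tendsto (fun r : ℝ =>
        g r - ((d : ℝ) + 2*α) * r ^ (-(d : ℝ) - 2) * ∫ u in (0:ℝ)..r, u ^ (d+1) * g u)
      (nhdsWithin 0 (Set.Ioi 0)) (nhds L)) :
    Tendsto (fun r : ℝ => r ^ (-(d : ℝ) - 2) * ∫ u in (0:ℝ)..r, u ^ (d+1) * g u)
        (nhdsWithin 0 (Set.Ioi 0)) (nhds (L / (2*(1-α)))) ∧
      Tendsto g (nhdsWithin 0 (Set.Ioi 0)) (nhds (((d : ℝ)+2) * L / (2*(1-α)))) := by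
  obtain ⟨hα0, hα1⟩ := hα
  have hev : ∀ᶠ r : ℝ in nhdsWithin 0 (Set.Ioi 0), r ∈ Set.Ioo (0:ℝ) 1 :=
    Ioo_mem_nhdsGT one_pos
  have hdR : (1:ℝ) ≤ d := by exact_mod_cast hd
  set f : ℝ → ℝ := fun u => u ^ (d+1) * g u with hf
  set G : ℝ → ℝ := fun r => ∫ u in (0:ℝ)..r, f u with hG
  have hpow : ∀ p : ℝ, 0 < p → Tendsto (fun r : ℝ => r ^ p) (nhdsWithin 0 (Set.Ioi 0)) (nhds 0) := by
    intro p hp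
    have := (Real.continuousAt_rpow_const 0 p (Or.inr hp.le)).tendsto
    rw [Real.zero_rpow hp.ne'] at this
    exact this.mono_left nhdsWithin_le_nhds
  have hf0 : Tendsto f (nhdsWithin 0 (Set.Ioi 0)) (nhds 0) := by
    have h1 := (hpow ((d:ℝ) - 1 + 2*α) (by linarith)).mul h0
    rw [mul_zero] at h1
    refine h1.congr' ?_
    filter_upwards [hev] with r hr
    rw [← mul_assoc, ← Real.rpow_add hr.1, hf]
    simp only
    rw [← Real.rpow_natCast]
    congr 2
    push_cast; ring
  have hfc : ContinuousOn f (Set.Icc 0 1) := by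
    intro x hx
    rcases hx.1.eq_or_lt with h | h
    · subst h
      have h2 : ContinuousWithinAt f (Set.Ioi 0) 0 := by
        unfold ContinuousWithinAt
        have : f 0 = 0 := by simp [hf]
        rw [this]; exact hf0
      exact (continuousWithinAt_Ioi_iff_Ici.mp h2).mono (fun y hy => hy.1)
    · have h3 : ContinuousWithinAt f (Set.Ioc 0 1) x :=
        ((continuous_pow (d+1)).continuousOn.mul hg) x ⟨h, hx.2⟩
      refine h3.mono_of_mem_nhdsWithin ?_
      rw [mem_nhdsWithin]
      exact ⟨Set.Ioi 0, isOpen_Ioi, h, fun y hy => ⟨hy.1, hy.2.2⟩⟩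
  have hGd : ∀ r ∈ Set.Ioo (0:ℝ) 1, HasDerivAt G (f r) r := by
    intro r hr
    have hn : Set.Icc (0:ℝ) 1 ∈ nhds r := Icc_mem_nhds hr.1 hr.2
    refine intervalIntegral.integral_hasDerivAt_right ?_ ?_ (hfc.continuousAt hn)
    · apply ContinuousOn.intervalIntegrable
      rw [Set.uIcc_of_le hr.1.le]
      exact hfc.mono (Set.Icc_subset_Icc_right hr.2.le)
    · exact ⟨Set.Icc 0 1, hn, hfc.aestronglyMeasurable measurableSet_Icc⟩
  have hG0 : Tendsto G (nhdsWithin 0 (Set.Ioi 0)) (nhds 0) := by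
    have h1 : ContinuousOn G (Set.Icc 0 1) :=
      intervalIntegral.continuousOn_primitive_interval
        (by rw [Set.uIcc_of_le zero_le_one]; exact hfc.integrableOn_Icc) |>.mono
        (by rw [Set.uIcc_of_le zero_le_one])
    have h2 := h1 0 (by simp)
    unfold ContinuousWithinAt at h2
    have : G 0 = 0 := by simp [hG]
    rw [this] at h2
    refine h2.mono_left ?_
    rw [← nhdsWithin_Ioo_eq_nhdsGT (zero_lt_one (α := ℝ))]
    exact nhdsWithin_mono _ Set.Ioo_subset_Icc_self
  set γ : ℝ := (d:ℝ) + 2*α with hγ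
  have hγ0 : 0 < γ := by rw [hγ]; linarith
  have hrp : ∀ (p : ℝ), ∀ r ∈ Set.Ioo (0:ℝ) 1, HasDerivAt (fun r : ℝ => r ^ p) (p * r ^ (p-1)) r :=
    fun p r hr => Real.hasDerivAt_rpow_const (Or.inl hr.1.ne')
  have hH0 : Tendsto (fun r => G r / r ^ γ) (nhdsWithin 0 (Set.Ioi 0)) (nhds 0) := by
    refine HasDerivAt.lhopital_zero_nhdsGT (hev.mono hGd) (hev.mono (hrp γ)) ?_ hG0 (hpow γ hγ0) ?_
    · filter_upwards [hev] with r hr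
      exact mul_ne_zero hγ0.ne' (Real.rpow_pos_of_pos hr.1 _).ne'
    · have h1 := h0.div_const γ
      rw [zero_div] at h1
      refine h1.congr' ?_
      filter_upwards [hev] with r hr
      have hp := Real.rpow_pos_of_pos hr.1 (γ-1)
      have e : f r = r ^ (γ-1) * r ^ (2-2*α) * g r := by
        rw [← Real.rpow_add hr.1, hf]
        simp only
        rw [← Real.rpow_natCast]
        congr 2
        push_cast; rw [hγ]; ring
      rw [e]
      field_simp
  have hb : 0 < 2 - 2*α := by linarith
  have key : Tendsto (fun r => (G r * r ^ (-γ)) / r ^ (2-2*α)) (nhdsWithin 0 (Set.Ioi 0))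
      (nhds (L / (2*(1-α)))) := by
    refine HasDerivAt.lhopital_zero_nhdsGT
      (hev.mono fun r hr => (hGd r hr).mul (hrp (-γ) r hr)) (hev.mono (hrp (2-2*α))) ?_ ?_
      (hpow _ hb) ?_
    · filter_upwards [hev] with r hr
      exact mul_ne_zero hb.ne' (Real.rpow_pos_of_pos hr.1 _).ne'
    · refine hH0.congr' ?_
      filter_upwards [hev] with r hr
      rw [Real.rpow_neg hr.1.le, div_eq_mul_inv]
    · refine (hL.div_const (2*(1-α))).congr' ?_
      filter_upwards [hev] with r hr
      have hp := Real.rpow_pos_of_pos hr.1 (2-2*α-1)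
      have e1 : f r * r ^ (-γ) = r ^ (2-2*α-1) * g r := by
        have : r ^ (2-2*α-1) = r ^ (((d+1 : ℕ)):ℝ) * r ^ (-γ) := by
          rw [← Real.rpow_add hr.1]; congr 1; push_cast; rw [hγ]; ring
        rw [this, hf, Real.rpow_natCast]; ring
      have e2 : r ^ (-γ-1) = r ^ (2-2*α-1) * r ^ (-(d:ℝ)-2) := by
        rw [← Real.rpow_add hr.1]; congr 1; rw [hγ]; ring
      rw [e1, e2]
      have h1 : (1 - α) ≠ 0 := by linarith
      have h2 : 2 - 2*α = 2*(1-α) := by ring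
      change (g r - γ * r ^ (-(d:ℝ)-2) * G r) / (2*(1-α)) = _
      generalize r ^ (2-2*α-1) = A at *
      generalize r ^ (-(d:ℝ)-2) = B at *
      rw [h2]
      field_simp
      ring
  have first : Tendsto (fun r : ℝ => r ^ (-(d : ℝ) - 2) * G r)
        (nhdsWithin 0 (Set.Ioi 0)) (nhds (L / (2*(1-α)))) := by
    refine key.congr' ?_
    filter_upwards [hev] with r hr
    have : r ^ (-(d:ℝ)-2) = r ^ (-γ) / r ^ (2-2*α) := by
      rw [← Real.rpow_sub hr.1]; congr 1; rw [hγ]; ring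
    rw [this]; ring
  refine ⟨first, ?_⟩
  have h1 := hL.add (first.const_mul γ)
  have h2 : L + γ * (L / (2*(1-α))) = ((d : ℝ)+2) * L / (2*(1-α)) := by
    have h1 : (1 - α) ≠ 0 := by linarith
    field_simp
    rw [hγ]; ring
  rw [h2] at h1
  refine h1.congr fun r => ?_
  change g r - γ * r ^ (-(d:ℝ)-2) * G r + γ * (r ^ (-(d:ℝ)-2) * G r) = g r
  ring
end

section
/- Let d ≥ 1 be an integer, α ∈ (0,1), β ∈ ℝ and δ > 0 with D := (d−1)β + 1 − 2α − δ > 0. Let b_L : (0,∞) → (0,∞) and b_N : (0,∞) → ℝ be continuous and satisfy b_L(r)/r^{2α} → 1 and b_N(r)/r^{2α} → β as r → 0⁺. For r > 0 define Φ(r) := ∫₀^r (ρ^{−δ} / b_L(ρ)) · exp( −(d−1) ∫_ρ^r b_N(u)/(b_L(u) u) du ) dρ. Then Φ(r) is finite for all sufficiently small r > 0 and lim_{r→0⁺} Φ(r) / r^{1−2α−δ} = 1/D. -/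
open MeasureTheory Set Filter

lemma aux_pow_int (s r : ℝ) (hs : -1 < s) (hr : 0 < r) :
    IntegrableOn (fun ρ : ℝ => ρ ^ s) (Ioo 0 r) ∧
      ∫ ρ in Ioo (0:ℝ) r, ρ ^ s = r ^ (s+1) / (s+1) := by
  have h1 := intervalIntegral.intervalIntegrable_rpow' (a := 0) (b := r) hs
  constructor
  · rw [intervalIntegrable_iff_integrableOn_Ioo_of_le hr.le] at h1
    exact h1
  · rw [← integral_Ioc_eq_integral_Ioo, ← intervalIntegral.integral_of_le hr.le,
      integral_rpow (Or.inl hs), Real.zero_rpow (by linarith), sub_zero]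

lemma aux_exp (g : ℝ → ℝ) (hg : ContinuousOn g (Ioi 0)) (c k₁ k₂ ρ r : ℝ) (hρ : 0 < ρ)
    (hr : ρ ≤ r) (h : ∀ u ∈ Icc ρ r, k₁ * u⁻¹ ≤ c * g u ∧ c * g u ≤ k₂ * u⁻¹) :
    ρ ^ k₂ * r ^ (-k₂) ≤ Real.exp (-c * ∫ u in ρ..r, g u) ∧
      Real.exp (-c * ∫ u in ρ..r, g u) ≤ ρ ^ k₁ * r ^ (-k₁) := by
  have hr0 : 0 < r := hρ.trans_le hr
  have hsub : uIcc ρ r ⊆ Ioi 0 := by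
    rw [uIcc_of_le hr]; intro x hx; exact hρ.trans_le hx.1
  have hgi : IntervalIntegrable (fun u => c * g u) volume ρ r :=
    ((hg.mono hsub).intervalIntegrable).const_mul c
  have hki : ∀ k : ℝ, IntervalIntegrable (fun u : ℝ => k * u⁻¹) volume ρ r := fun k =>
    ((continuousOn_inv₀.mono (fun x hx => (hsub hx).ne')).intervalIntegrable).const_mul k
  have hkv : ∀ k : ℝ, ∫ u in ρ..r, k * u⁻¹ = k * (Real.log r - Real.log ρ) := fun k => by
    rw [intervalIntegral.integral_const_mul, integral_inv_of_pos hρ hr0,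
      Real.log_div hr0.ne' hρ.ne']
  have e1 := intervalIntegral.integral_mono_on hr (hki k₁) hgi (fun u hu => (h u hu).1)
  have e2 := intervalIntegral.integral_mono_on hr hgi (hki k₂) (fun u hu => (h u hu).2)
  rw [hkv, intervalIntegral.integral_const_mul] at e1 e2
  simp only [Real.rpow_def_of_pos hρ, Real.rpow_def_of_pos hr0, ← Real.exp_add, Real.exp_le_exp]
  constructor <;> linarith

lemma aux_cont (g : ℝ → ℝ) (hg : ContinuousOn g (Ioi 0)) (r : ℝ) (hr : 0 < r) :
    ContinuousOn (fun ρ => ∫ u in ρ..r, g u) (Ioi 0) := by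
  intro x hx
  have hsub : uIcc x r ⊆ Ioi 0 := fun y hy => (lt_min hx hr).trans_le hy.1
  exact (intervalIntegral.integral_hasDerivAt_left ((hg.mono hsub).intervalIntegrable)
    (hg.stronglyMeasurableAtFilter isOpen_Ioi x hx)
    (hg.continuousAt (isOpen_Ioi.mem_nhds hx))).continuousAt.continuousWithinAt

lemma aux_main (c α β δ D : ℝ) (hDdef : D = c * β + 1 - 2*α - δ)
    (bL bN : ℝ → ℝ)
    (hbLcont : ContinuousOn bL (Ioi 0)) (hbNcont : ContinuousOn bN (Ioi 0))
    (hbLpos : ∀ r, 0 < r → 0 < bL r)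
    (hbLlim : Tendsto (fun r : ℝ => bL r / r ^ (2*α)) (nhdsWithin 0 (Ioi 0)) (nhds 1))
    (hbNlim : Tendsto (fun r : ℝ => bN r / r ^ (2*α)) (nhdsWithin 0 (Ioi 0)) (nhds β))
    (ε : ℝ) (hε : 0 < ε) (hεD : ε < D) :
    ∃ r₀ : ℝ, 0 < r₀ ∧ ∀ r ∈ Ioo (0:ℝ) r₀,
        IntegrableOn
          (fun ρ => ρ ^ (-δ) / bL ρ *
            Real.exp (-c * ∫ u in ρ..r, bN u / (bL u * u)))
          (Ioo 0 r) ∧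
        (1 - ε) / (D + ε) ≤ (∫ ρ in Ioo (0:ℝ) r,
            ρ ^ (-δ) / bL ρ *
              Real.exp (-c * ∫ u in ρ..r, bN u / (bL u * u))) /
            r ^ (1 - 2*α - δ) ∧
        (∫ ρ in Ioo (0:ℝ) r,
            ρ ^ (-δ) / bL ρ *
              Real.exp (-c * ∫ u in ρ..r, bN u / (bL u * u))) /
            r ^ (1 - 2*α - δ) ≤ (1 + ε) / (D - ε) := by
  have t1 : Tendsto (fun r : ℝ => r ^ (2*α) / bL r) (nhdsWithin 0 (Ioi 0)) (nhds 1) := by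
    have := hbLlim.inv₀ one_ne_zero
    simpa [inv_div] using this
  have t2 : Tendsto (fun r : ℝ => c * (bN r / bL r)) (nhdsWithin 0 (Ioi 0)) (nhds (c * β)) := by
    have := (hbNlim.mul t1).const_mul c
    rw [mul_one] at this
    refine this.congr' ?_
    filter_upwards [self_mem_nhdsWithin] with r hr
    have h1 : r ^ (2*α) ≠ 0 := (Real.rpow_pos_of_pos hr _).ne'
    have h2 := (hbLpos r hr).ne'
    field_simp
  have ev := (t1.eventually (Icc_mem_nhds (show 1 - ε < 1 by linarith)
      (show 1 < 1 + ε by linarith))).and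
    (t2.eventually (Icc_mem_nhds (show c*β - ε < c*β by linarith)
      (show c*β < c*β + ε by linarith)))
  obtain ⟨r₀, hr₀, hev⟩ := mem_nhdsGT_iff_exists_Ioo_subset.1 ev
  refine ⟨r₀, hr₀, fun r hr => ?_⟩
  have hr0 : 0 < r := hr.1
  have hg : ContinuousOn (fun u => bN u / (bL u * u)) (Ioi 0) :=
    hbNcont.div (hbLcont.mul continuousOn_id)
      (fun u hu => (mul_pos (hbLpos u hu) hu).ne')
  have hexp : ∀ ρ ∈ Ioo 0 r, _ := fun ρ hρ =>
    aux_exp (fun u => bN u / (bL u * u)) hg c (c*β-ε) (c*β+ε) ρ r hρ.1 hρ.2.le (by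
      intro u hu
      have hu0 : 0 < u := hρ.1.trans_le hu.1
      have := (hev ⟨hu0, hu.2.trans_lt hr.2⟩).2
      have e : c * (bN u / (bL u * u)) = c * (bN u / bL u) * u⁻¹ := by
        have h2 := (hbLpos u hu0).ne'
        field_simp
      have hi : 0 ≤ u⁻¹ := (inv_pos.2 hu0).le
      simp only [e]
      exact ⟨mul_le_mul_of_nonneg_right this.1 hi, mul_le_mul_of_nonneg_right this.2 hi⟩)
  set F : ℝ → ℝ := fun ρ => ρ ^ (-δ) / bL ρ *
            Real.exp (-c * ∫ u in ρ..r, bN u / (bL u * u)) with hF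
  have hw : ∀ ρ, 0 < ρ → ρ ^ (-δ) / bL ρ = ρ ^ (-δ-2*α) * (ρ ^ (2*α) / bL ρ) := by
    intro ρ hρ
    rw [← mul_div_assoc, ← Real.rpow_add hρ]; congr 2; ring
  have hup : ∀ ρ ∈ Ioo 0 r,
      F ρ ≤ (1+ε) * r ^ (-(c*β-ε)) * ρ ^ (c*β-ε-δ-2*α) := by
    intro ρ hρ
    have a := (hev ⟨hρ.1, hρ.2.trans hr.2⟩).1
    have p := Real.rpow_pos_of_pos hρ.1 (-δ-2*α)
    have e : ρ ^ (c*β-ε-δ-2*α) = ρ ^ (-δ-2*α) * ρ ^ (c*β-ε) := by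
      rw [← Real.rpow_add hρ.1]; congr 1; ring
    calc F ρ = ρ ^ (-δ-2*α) * (ρ ^ (2*α) / bL ρ) *
            Real.exp (-c * ∫ u in ρ..r, bN u / (bL u * u)) := by rw [hF, ← hw ρ hρ.1]
      _ ≤ ρ ^ (-δ-2*α) * (1+ε) * (ρ ^ (c*β-ε) * r ^ (-(c*β-ε))) :=
          mul_le_mul (mul_le_mul_of_nonneg_left a.2 p.le) (hexp ρ hρ).2 (Real.exp_pos _).le
            (by positivity)
      _ = _ := by rw [e]; ring
  have hlow : ∀ ρ ∈ Ioo 0 r,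
      (1-ε) * r ^ (-(c*β+ε)) * ρ ^ (c*β+ε-δ-2*α) ≤ F ρ := by
    intro ρ hρ
    have a := (hev ⟨hρ.1, hρ.2.trans hr.2⟩).1
    have p := Real.rpow_pos_of_pos hρ.1 (-δ-2*α)
    have q := Real.rpow_pos_of_pos hρ.1 (c*β+ε)
    have q' := Real.rpow_pos_of_pos hr0 (-(c*β+ε))
    have q2 := Real.rpow_pos_of_pos hρ.1 (2*α)
    have q3 := hbLpos ρ hρ.1
    have e : ρ ^ (c*β+ε-δ-2*α) = ρ ^ (-δ-2*α) * ρ ^ (c*β+ε) := by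
      rw [← Real.rpow_add hρ.1]; congr 1; ring
    calc _ = ρ ^ (-δ-2*α) * (1-ε) * (ρ ^ (c*β+ε) * r ^ (-(c*β+ε))) := by rw [e]; ring
      _ ≤ ρ ^ (-δ-2*α) * (ρ ^ (2*α) / bL ρ) *
            Real.exp (-c * ∫ u in ρ..r, bN u / (bL u * u)) :=
          mul_le_mul (mul_le_mul_of_nonneg_left a.1 p.le) (hexp ρ hρ).1 (by positivity)
            (by positivity)
      _ = F ρ := by rw [hF, ← hw ρ hρ.1]
  obtain ⟨i1, v1⟩ := aux_pow_int (c*β-ε-δ-2*α) r (by linarith) hr0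
  obtain ⟨i2, v2⟩ := aux_pow_int (c*β+ε-δ-2*α) r (by linarith) hr0
  have j1 := i1.const_mul ((1+ε) * r ^ (-(c*β-ε)))
  have j2 := i2.const_mul ((1-ε) * r ^ (-(c*β+ε)))
  have hFc : ContinuousOn F (Ioo 0 r) := by
    refine ContinuousOn.mono (s := Ioi 0) ?_ (fun x hx => hx.1)
    refine ContinuousOn.mul (ContinuousOn.div ?_ hbLcont (fun x hx => (hbLpos x hx).ne')) ?_
    · exact continuousOn_id.rpow_const (fun x hx => Or.inl (ne_of_gt hx))
    · exact ((aux_cont _ hg r hr0).const_smul (-c)).rexp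
  have hFi : IntegrableOn F (Ioo 0 r) := by
    refine Integrable.mono' j1 (hFc.aestronglyMeasurable measurableSet_Ioo) ?_
    refine (ae_restrict_iff' measurableSet_Ioo).2 (Eventually.of_forall fun ρ hρ => ?_)
    have : 0 ≤ F ρ := by
      have := hbLpos ρ hρ.1
      have := hρ.1
      simp only [hF]; positivity
    rw [Real.norm_of_nonneg this]
    exact hup ρ hρ
  have hpp := Real.rpow_pos_of_pos hr0 (1 - 2*α - δ)
  refine ⟨hFi, ?_, ?_⟩
  · have := setIntegral_mono_on j2 hFi measurableSet_Ioo hlow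
    rw [integral_const_mul, v2] at this
    rw [le_div_iff₀ hpp]
    refine le_trans (le_of_eq ?_) this
    have e : r ^ (1 - 2*α - δ) = r ^ (-(c*β+ε)) * r ^ (c*β+ε-δ-2*α+1) := by
      rw [← Real.rpow_add hr0]; congr 1; ring
    rw [e, show c*β+ε-δ-2*α+1 = D + ε by rw [hDdef]; ring]; ring
  · have := setIntegral_mono_on hFi j1 measurableSet_Ioo hup
    rw [integral_const_mul, v1] at this
    rw [div_le_iff₀ hpp]
    refine le_trans this (le_of_eq ?_)
    have e : r ^ (1 - 2*α - δ) = r ^ (-(c*β-ε)) * r ^ (c*β-ε-δ-2*α+1) := by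
      rw [← Real.rpow_add hr0]; congr 1; ring
    rw [e, show c*β-ε-δ-2*α+1 = D - ε by rw [hDdef]; ring]; ring



/-- Asymptotics of the derivative of the change of variables used in the proof of anomalous
regularization: with `b_L(r) ∼ r^{2α}`, `b_N(r) ∼ β r^{2α}` at the origin and
`D = (d−1)β + 1 − 2α − δ > 0`, the function
`Φ(r) = ∫₀^r (ρ^{−δ}/b_L(ρ)) exp(−(d−1)∫_ρ^r b_N(u)/(b_L(u)u) du) dρ`
is finite for small `r > 0` and `Φ(r)/r^{1−2α−δ} → 1/D` as `r → 0⁺`. -/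
theorem change_of_variables_asymptotics (d : ℕ) (hd : 1 ≤ d) (α β δ : ℝ)
    (hα : α ∈ Ioo (0:ℝ) 1) (hδ : 0 < δ)
    (hD : 0 < ((d:ℝ) - 1) * β + 1 - 2*α - δ)
    (bL bN : ℝ → ℝ)
    (hbLcont : ContinuousOn bL (Ioi 0)) (hbNcont : ContinuousOn bN (Ioi 0))
    (hbLpos : ∀ r, 0 < r → 0 < bL r)
    (hbLlim : Tendsto (fun r : ℝ => bL r / r ^ (2*α)) (nhdsWithin 0 (Ioi 0)) (nhds 1))
    (hbNlim : Tendsto (fun r : ℝ => bN r / r ^ (2*α)) (nhdsWithin 0 (Ioi 0)) (nhds β)) :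
    ∃ r₀ : ℝ, 0 < r₀ ∧
      (∀ r ∈ Ioo (0:ℝ) r₀,
        IntegrableOn
          (fun ρ => ρ ^ (-δ) / bL ρ *
            Real.exp (-((d:ℝ) - 1) * ∫ u in ρ..r, bN u / (bL u * u)))
          (Ioo 0 r)) ∧
      Tendsto
        (fun r : ℝ =>
          (∫ ρ in Ioo (0:ℝ) r,
            ρ ^ (-δ) / bL ρ *
              Real.exp (-((d:ℝ) - 1) * ∫ u in ρ..r, bN u / (bL u * u))) /
            r ^ (1 - 2*α - δ))
        (nhdsWithin 0 (Ioi 0))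
        (nhds (1 / (((d:ℝ) - 1) * β + 1 - 2*α - δ))) := by
  have key := aux_main ((d:ℝ)-1) α β δ _ rfl bL bN hbLcont hbNcont hbLpos hbLlim hbNlim
  set D := ((d:ℝ) - 1) * β + 1 - 2*α - δ with hDd
  obtain ⟨r₀, hr₀, h⟩ := key (D/2) (by linarith) (by linarith)
  refine ⟨r₀, hr₀, fun r hr => (h r hr).1, ?_⟩
  have hsmall : ∀ᶠ ε in nhdsWithin (0:ℝ) (Ioi 0), 0 < ε ∧ ε < D := Ioo_mem_nhdsGT hD
  rw [tendsto_order]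
  constructor
  · intro a ha
    have t : Tendsto (fun ε : ℝ => (1 - ε) / (D + ε)) (nhdsWithin 0 (Ioi 0)) (nhds (1 / D)) := by
      have : ContinuousAt (fun ε : ℝ => (1 - ε) / (D + ε)) 0 :=
        ContinuousAt.div (by fun_prop) (by fun_prop) (by simpa using hD.ne')
      have := this.tendsto
      simp only [sub_zero, add_zero] at this
      exact this.mono_left nhdsWithin_le_nhds
    obtain ⟨ε, h1, h2⟩ := ((t.eventually (lt_mem_nhds ha)).and hsmall).exists
    obtain ⟨r₁, hr₁, h'⟩ := key ε h2.1 h2.2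
    filter_upwards [Ioo_mem_nhdsGT hr₁] with r hr
    exact h1.trans_le (h' r hr).2.1
  · intro a ha
    have t : Tendsto (fun ε : ℝ => (1 + ε) / (D - ε)) (nhdsWithin 0 (Ioi 0)) (nhds (1 / D)) := by
      have : ContinuousAt (fun ε : ℝ => (1 + ε) / (D - ε)) 0 :=
        ContinuousAt.div (by fun_prop) (by fun_prop) (by simpa using hD.ne')
      have := this.tendsto
      simp only [sub_zero, add_zero] at this
      exact this.mono_left nhdsWithin_le_nhds
    obtain ⟨ε, h1, h2⟩ := ((t.eventually (gt_mem_nhds ha)).and hsmall).exists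
    obtain ⟨r₁, hr₁, h'⟩ := key ε h2.1 h2.2
    filter_upwards [Ioo_mem_nhdsGT hr₁] with r hr
    exact (h' r hr).2.2.trans_lt h1
end

section
/- Let d ≥ 2 be an integer, α ∈ (0,1), β > (2α−1)/(d−1), and δ ∈ (0, δ_*) where δ_* := min{1−α, (d−1)β+1−2α}. Let b_L : (0,∞) → (0,∞) and b_N : (0,∞) → ℝ be differentiable and satisfy, as r → 0⁺: b_L(r)/r^{2α} → 1, b_N(r)/r^{2α} → β, b_L'(r)/r^{2α−1} → 2α, and b_N'(r)/r^{2α−1} → 2αβ. With Φ(r) := ∫₀^r (ρ^{−δ}/b_L(ρ)) exp(−(d−1)∫_ρ^r b_N(u)/(b_L(u)u) du) dρ, define q̃(r) := r^{−δ}/b_L(r) + (d−1)(1 − b_N(r)/b_L(r)) Φ(r)/r. Then there exists ℓ > 0 such that q̃ is differentiable on (0,ℓ) with q̃'(r) ≤ 0 for all r ∈ (0,ℓ); in particular q̃ is nonincreasing on (0,ℓ). -/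
open MeasureTheory Set Filter

lemma aux_phi (n α β δ c : ℝ) (hc : 0 < c) (hcdef : c = n * β + 1 - 2*α - δ)
    (bL bN : ℝ → ℝ)
    (hbLpos : ∀ r, 0 < r → 0 < bL r)
    (hbLdiff : ∀ r, 0 < r → DifferentiableAt ℝ bL r)
    (hbNdiff : ∀ r, 0 < r → DifferentiableAt ℝ bN r)
    (hbLlim : Tendsto (fun r : ℝ => bL r / r ^ (2*α)) (nhdsWithin 0 (Ioi 0)) (nhds 1))
    (hbNlim : Tendsto (fun r : ℝ => bN r / r ^ (2*α)) (nhdsWithin 0 (Ioi 0)) (nhds β))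
    (Φ : ℝ → ℝ)
    (hΦ : Φ = fun r => ∫ ρ in Ioo (0:ℝ) r, ρ ^ (-δ) / bL ρ *
                  Real.exp (-n * ∫ u in ρ..r, bN u / (bL u * u))) :
    (∀ᶠ r in nhdsWithin 0 (Ioi 0),
      HasDerivAt Φ (r ^ (-δ) / bL r - n * (bN r / (bL r * r)) * Φ r) r) ∧
    Tendsto (fun r => Φ r / r ^ (1 - 2*α - δ)) (nhdsWithin 0 (Ioi 0)) (nhds (1/c)) := by
  set k : ℝ → ℝ := fun u => bN u / (bL u * u) with hk
  have hkc : ContinuousOn k (Ioi 0) := by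
    intro r hr
    have hr' : (0:ℝ) < r := hr
    have h1 := (hbLdiff r hr).continuousAt
    have h2 := (hbNdiff r hr).continuousAt
    exact (h2.div (h1.mul continuousAt_id)
      (mul_pos (hbLpos r hr) hr').ne').continuousWithinAt
  have hkca : ∀ r, 0 < r → ContinuousAt k r := fun r hr =>
    hkc.continuousAt (Ioi_mem_nhds hr)
  have hkint : ∀ a b, 0 < a → 0 < b → IntervalIntegrable k volume a b := by
    intro a b ha hb
    apply (hkc.mono _).intervalIntegrable
    intro x hx
    have := hx.1
    exact lt_of_lt_of_le (lt_min ha hb) this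
  set K : ℝ → ℝ := fun r => ∫ u in (1:ℝ)..r, k u with hK
  have hKd : ∀ r, 0 < r → HasDerivAt K (k r) r := fun r hr =>
    intervalIntegral.integral_hasDerivAt_right (hkint 1 r one_pos hr)
      (hkc.stronglyMeasurableAtFilter isOpen_Ioi r hr) (hkca r hr)
  set E : ℝ → ℝ := fun r => Real.exp (n * K r) with hE
  have hEpos : ∀ r, 0 < E r := fun r => Real.exp_pos _
  have hEd : ∀ r, 0 < r → HasDerivAt E (E r * (n * k r)) r := fun r hr =>
    ((hKd r hr).const_mul n).exp
  have hEq : ∀ ρ r, 0 < ρ → 0 < r → Real.exp (-n * ∫ u in ρ..r, k u) = E ρ / E r := by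
    intro ρ r hρ hr
    have h1 : ∫ u in ρ..r, k u = K r - K ρ :=
      (intervalIntegral.integral_interval_sub_left (hkint 1 r one_pos hr)
        (hkint 1 ρ one_pos hρ)).symm
    rw [h1, hE, ← Real.exp_sub]
    congr 1
    ring
  set g : ℝ → ℝ := fun ρ => ρ ^ (-δ) / bL ρ * E ρ with hg
  have hgpos : ∀ r, 0 < r → 0 < g r := fun r hr =>
    mul_pos (div_pos (Real.rpow_pos_of_pos hr _) (hbLpos r hr)) (hEpos r)
  have hgca : ∀ r, 0 < r → ContinuousAt g r := fun r hr =>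
    ((Real.continuousAt_rpow_const r (-δ) (Or.inl hr.ne')).div (hbLdiff r hr).continuousAt
      (hbLpos r hr).ne').mul (hEd r hr).continuousAt
  have hgc : ContinuousOn g (Ioi 0) := fun r hr => (hgca r hr).continuousWithinAt
  set G : ℝ → ℝ := fun r => ∫ ρ in (0:ℝ)..r, g ρ with hG
  have hΦG : ∀ r, 0 < r → Φ r = G r / E r := by
    intro r hr
    rw [hΦ, hG]
    simp only
    rw [intervalIntegral.integral_of_le hr.le, integral_Ioc_eq_integral_Ioo, ← integral_div]
    apply setIntegral_congr_fun measurableSet_Ioo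
    intro ρ hρ
    simp only
    rw [hEq ρ r hρ.1 hr, hg]
    simp only
    ring
  have hpos : ∀ᶠ r : ℝ in nhdsWithin 0 (Ioi 0), 0 < r := self_mem_nhdsWithin
  -- H
  set l : ℝ := 1 - 2*α - δ with hl
  set H : ℝ → ℝ := fun r => r ^ l * E r with hH
  set m : ℝ → ℝ := fun r => l + n * (bN r / bL r) with hm
  have hmlim : Tendsto m (nhdsWithin 0 (Ioi 0)) (nhds c) := by
    have h1 : Tendsto (fun r => l + n * ((bN r / r^(2*α)) / (bL r / r^(2*α))))
        (nhdsWithin 0 (Ioi 0)) (nhds (l + n * (β/1))) :=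
      ((hbNlim.div hbLlim one_ne_zero).const_mul n).const_add l
    have h2 : l + n * (β/1) = c := by rw [hcdef, hl]; ring
    rw [h2] at h1
    refine h1.congr' ?_
    filter_upwards [hpos] with r hr
    have h3 := (Real.rpow_pos_of_pos hr (2*α)).ne'
    have h4 := (hbLpos r hr).ne'
    simp only [hm]
    field_simp
  have hHpos : ∀ r, 0 < r → 0 < H r := fun r hr =>
    mul_pos (Real.rpow_pos_of_pos hr _) (hEpos r)
  have hHd : ∀ r, 0 < r → HasDerivAt H (H r / r * m r) r := by
    intro r hr
    have h := (Real.hasDerivAt_rpow_const (x := r) (p := l) (Or.inl hr.ne')).mul (hEd r hr)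
    refine h.congr_deriv ?_
    have h4 := (hbLpos r hr).ne'
    simp only [hH, hm, hk]
    rw [Real.rpow_sub_one hr.ne']
    field_simp
  -- monotone comparison
  have hev : ∀ᶠ r in nhdsWithin 0 (Ioi 0), c/2 < m r ∧ 1/2 < bL r / r^(2*α) :=
    (hmlim.eventually (lt_mem_nhds (by linarith))).and
      (hbLlim.eventually (lt_mem_nhds (by norm_num)))
  obtain ⟨e, he, hev⟩ := mem_nhdsGT_iff_exists_Ioo_subset.1 hev
  have he0 : (0:ℝ) < e := he
  set W : ℝ → ℝ := fun r => H r * r ^ (-(c/2)) with hW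
  have hWd : ∀ r, 0 < r → HasDerivAt W (H r / r * r ^ (-(c/2)) * (m r - c/2)) r := by
    intro r hr
    have h := (hHd r hr).mul
      (Real.hasDerivAt_rpow_const (x := r) (p := -(c/2)) (Or.inl hr.ne'))
    refine h.congr_deriv ?_
    rw [Real.rpow_sub_one hr.ne']
    field_simp
    ring
  have hWm : MonotoneOn W (Ioo 0 e) := by
    apply monotoneOn_of_deriv_nonneg (convex_Ioo 0 e)
    · exact fun r hr => (hWd r hr.1).continuousAt.continuousWithinAt
    · rw [interior_Ioo]
      exact fun r hr => (hWd r hr.1).differentiableAt.differentiableWithinAt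
    · rw [interior_Ioo]
      intro r hr
      rw [(hWd r hr.1).deriv]
      have := (hev hr).1
      have h1 := hHpos r hr.1
      have h2 := Real.rpow_pos_of_pos hr.1 (-(c/2))
      have h3 := hr.1
      apply mul_nonneg (by positivity) (by linarith)
  set C := W (e/2) with hC
  have hHle : ∀ r, 0 < r → r ≤ e/2 → H r ≤ C * r ^ (c/2) := by
    intro r hr hre
    have h := hWm (a := r) ⟨hr, by linarith⟩ (b := e/2) ⟨by linarith, by linarith⟩ hre
    have h2 := Real.rpow_pos_of_pos hr (c/2)
    calc H r = W r * r^(c/2) := by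
          simp only [hW]
          rw [Real.rpow_neg hr.le]
          field_simp
      _ ≤ _ := mul_le_mul_of_nonneg_right h h2.le
  have hgH : ∀ r, 0 < r → g r = H r / r / (bL r / r^(2*α)) := by
    intro r hr
    have h3 := (Real.rpow_pos_of_pos hr (2*α)).ne'
    have h4 := (hbLpos r hr).ne'
    simp only [hg, hH]
    have : r ^ l = r * r^(-δ) / r^(2*α) := by
      rw [hl, show 1 - 2*α - δ = 1 + (-δ) - 2*α by ring, Real.rpow_sub hr, Real.rpow_add hr,
        Real.rpow_one]
    rw [this]
    field_simp
  have hgle : ∀ r, 0 < r → r ≤ e/2 → g r ≤ 2 * C * r ^ (c/2 - 1) := by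
    intro r hr hre
    have h1 := hHle r hr hre
    have h2 := (hev (show r ∈ Ioo 0 e from ⟨hr, by linarith⟩)).2
    have h5 := hHpos r hr
    rw [hgH r hr, Real.rpow_sub_one hr.ne', div_le_iff₀ (by linarith)]
    have h6 : H r / r ≤ C * r^(c/2) / r := div_le_div_of_nonneg_right h1 hr.le
    have h7 : 0 < H r / r := by positivity
    have h8 : 2 * C * (r^(c/2)/r) = 2 * (C * r^(c/2) / r) := by ring
    rw [h8]
    nlinarith
  have hgi : ∀ r, 0 < r → r ≤ e/2 → IntervalIntegrable g volume 0 r := by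
    intro r hr hre
    have hi : IntervalIntegrable (fun x : ℝ => 2 * C * x ^ (c/2 - 1)) volume 0 r :=
      (intervalIntegral.intervalIntegrable_rpow' (by linarith)).const_mul _
    rw [intervalIntegrable_iff_integrableOn_Ioc_of_le hr.le] at hi ⊢
    refine Integrable.mono' hi ((hgc.mono fun x hx => hx.1).aestronglyMeasurable
      measurableSet_Ioc) ?_
    refine (ae_restrict_iff' measurableSet_Ioc).2 (Eventually.of_forall ?_)
    intro x hx
    rw [Real.norm_of_nonneg (hgpos x hx.1).le]
    exact hgle x hx.1 (hx.2.trans hre)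
  have hGd : ∀ r, 0 < r → r ≤ e/2 → HasDerivAt G (g r) r := fun r hr hre =>
    intervalIntegral.integral_hasDerivAt_right (hgi r hr hre)
      (hgc.stronglyMeasurableAtFilter isOpen_Ioi r hr) (hgca r hr)
  have hsmall : ∀ᶠ r : ℝ in nhdsWithin 0 (Ioi 0), 0 < r ∧ r < e/2 :=
    Ioo_mem_nhdsGT (by linarith)
  have hG0 : Tendsto G (nhdsWithin 0 (Ioi 0)) (nhds 0) := by
    have h := intervalIntegral.continuousOn_primitive_interval
      (f := g) (a := 0) (b := e/2) (μ := volume) (by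
        have := hgi (e/2) (by linarith) le_rfl
        rwa [intervalIntegrable_iff', ] at this)
    have h1 := h 0 (by simp)
    rw [uIcc_of_le (by linarith : (0:ℝ) ≤ e/2)] at h1
    have h2 : Tendsto G (nhdsWithin 0 (Icc 0 (e/2))) (nhds (G 0)) := h1
    have h3 : G 0 = 0 := by simp [hG]
    rw [h3] at h2
    refine h2.mono_left ?_
    rw [← nhdsWithin_Ioo_eq_nhdsGT (show (0:ℝ) < e/2 by linarith)]
    exact nhdsWithin_mono _ Ioo_subset_Icc_self
  have hH0 : Tendsto H (nhdsWithin 0 (Ioi 0)) (nhds 0) := by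
    have h1 : Tendsto (fun r : ℝ => C * r^(c/2)) (nhdsWithin 0 (Ioi 0)) (nhds 0) := by
      have h := (Real.continuousAt_rpow_const 0 (c/2) (Or.inr (by linarith))).tendsto.const_mul C
      rw [Real.zero_rpow (by linarith), mul_zero] at h
      exact h.mono_left nhdsWithin_le_nhds
    refine tendsto_of_tendsto_of_tendsto_of_le_of_le' tendsto_const_nhds h1 ?_ ?_
    · filter_upwards [hpos] with r hr using (hHpos r hr).le
    · filter_upwards [hsmall] with r hr using hHle r hr.1 hr.2.le
  have hmpos : ∀ᶠ r in nhdsWithin 0 (Ioi 0), 0 < m r :=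
    hmlim.eventually (lt_mem_nhds hc)
  have hGH : Tendsto (fun r => G r / H r) (nhdsWithin 0 (Ioi 0)) (nhds (1/c)) := by
    refine HasDerivAt.lhopital_zero_nhdsGT (f' := g) (g' := fun r => H r / r * m r)
      ?_ ?_ ?_ hG0 hH0 ?_
    · filter_upwards [hsmall] with r hr using hGd r hr.1 hr.2.le
    · filter_upwards [hsmall] with r hr using hHd r hr.1
    · filter_upwards [hsmall, hmpos] with r hr hmr
      have := hHpos r hr.1
      have := hr.1
      positivity
    · have h := (hbLlim.mul hmlim).inv₀ (by simpa using hc.ne')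
      rw [one_mul, ← one_div] at h
      refine h.congr' ?_
      filter_upwards [hpos, hmpos] with r hr hmr
      have h1 := (hHpos r hr).ne'
      have h3 := (Real.rpow_pos_of_pos hr (2*α)).ne'
      have h4 := (hbLpos r hr).ne'
      have h5 := hmr.ne'
      rw [hgH r hr]
      field_simp
  constructor
  · filter_upwards [hsmall] with r hr
    have h := (hGd r hr.1 hr.2.le).div (hEd r hr.1) (hEpos r).ne'
    have h2 : Φ =ᶠ[nhds r] (G / E) := by
      filter_upwards [Ioi_mem_nhds hr.1] with x hx using hΦG x hx
    refine (h.congr_of_eventuallyEq h2).congr_deriv ?_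
    rw [hΦG r hr.1]
    have h5 := (hEpos r).ne'
    have h4 := (hbLpos r hr.1).ne'
    have h3 := hr.1.ne'
    simp only [hg, hk]
    field_simp
  · refine hGH.congr' ?_
    filter_upwards [hpos] with r hr
    rw [hΦG r hr]
    simp only [hH]
    rw [div_div, mul_comm]

lemma aux_main_s3 (n α β δ c : ℝ) (hn : 1 ≤ n) (hα0 : 0 < α) (hδ0 : 0 < δ) (hδ1 : δ < 1 - α)
    (hc : 0 < c) (hcdef : c = n * β + 1 - 2*α - δ)
    (bL bN : ℝ → ℝ)
    (hbLpos : ∀ r, 0 < r → 0 < bL r)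
    (hbLdiff : ∀ r, 0 < r → DifferentiableAt ℝ bL r)
    (hbNdiff : ∀ r, 0 < r → DifferentiableAt ℝ bN r)
    (hbLlim : Tendsto (fun r : ℝ => bL r / r ^ (2*α)) (nhdsWithin 0 (Ioi 0)) (nhds 1))
    (hbNlim : Tendsto (fun r : ℝ => bN r / r ^ (2*α)) (nhdsWithin 0 (Ioi 0)) (nhds β))
    (hbLdlim : Tendsto (fun r : ℝ => deriv bL r / r ^ (2*α - 1)) (nhdsWithin 0 (Ioi 0))
      (nhds (2*α)))
    (hbNdlim : Tendsto (fun r : ℝ => deriv bN r / r ^ (2*α - 1)) (nhdsWithin 0 (Ioi 0))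
      (nhds (2*α*β)))
    (Φ : ℝ → ℝ)
    (hΦd : ∀ᶠ r in nhdsWithin 0 (Ioi 0),
      HasDerivAt Φ (r ^ (-δ) / bL r - n * (bN r / (bL r * r)) * Φ r) r)
    (hΦlim : Tendsto (fun r => Φ r / r ^ (1 - 2*α - δ)) (nhdsWithin 0 (Ioi 0)) (nhds (1/c))) :
    ∃ ℓ : ℝ, 0 < ℓ ∧
      (∀ r ∈ Ioo (0:ℝ) ℓ,
        DifferentiableAt ℝ (fun r : ℝ => r ^ (-δ) / bL r + n * (1 - bN r / bL r) * Φ r / r) r ∧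
        deriv (fun r : ℝ => r ^ (-δ) / bL r + n * (1 - bN r / bL r) * Φ r / r) r ≤ 0) ∧
      AntitoneOn (fun r : ℝ => r ^ (-δ) / bL r + n * (1 - bN r / bL r) * Φ r / r)
        (Ioo 0 ℓ) := by
  set Q := (fun r : ℝ => r ^ (-δ) / bL r + n * (1 - bN r / bL r) * Φ r / r) with hQ
  have hpos : ∀ᶠ r : ℝ in nhdsWithin 0 (Ioi 0), 0 < r := self_mem_nhdsWithin
  let T : ℝ → ℝ → ℝ → ℝ → ℝ → ℝ := fun A B A1 B1 P =>
    -δ/A - A1/A^2 + n*(-((B1*A - B*A1)/A^2*P) + (1-B/A)*((1/A - n*(B/A)*P) - P))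
  have hT : Tendsto (fun r => T (bL r / r ^ (2*α)) (bN r / r ^ (2*α))
      (deriv bL r / r ^ (2*α - 1)) (deriv bN r / r ^ (2*α - 1)) (Φ r / r ^ (1 - 2*α - δ)))
      (nhdsWithin 0 (Ioi 0)) (nhds (T 1 β (2*α) (2*α*β) (1/c))) := by
    have hA2 := hbLlim.pow 2
    have hBA := hbNlim.div hbLlim one_ne_zero
    refine ((tendsto_const_nhds.div hbLlim one_ne_zero).sub
      (hbLdlim.div hA2 (by norm_num))).add (Tendsto.const_mul n
        (Tendsto.add ((((hbNdlim.mul hbLlim).sub (hbNlim.mul hbLdlim)).div hA2 (by norm_num)).mul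
          hΦlim).neg ?_))
    exact (hBA.const_sub 1).mul (((tendsto_const_nhds.div hbLlim one_ne_zero).sub
      ((hBA.const_mul n).mul hΦlim)).sub hΦlim)
  have hTneg : T 1 β (2*α) (2*α*β) (1/c) < 0 := by
    have : T 1 β (2*α) (2*α*β) (1/c) = -((δ+2*α)*(n+1-2*α-δ)/c) := by
      simp only [T]
      field_simp
      rw [hcdef]
      ring
    rw [this, neg_lt_zero]
    have : 0 < n+1-2*α-δ := by linarith
    positivity
  have hev : ∀ᶠ r in nhdsWithin 0 (Ioi 0), DifferentiableAt ℝ Q r ∧ deriv Q r ≤ 0 := by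
    filter_upwards [hpos, hΦd, hT.eventually (gt_mem_nhds hTneg)] with r hr hd hneg
    have hL := (hbLdiff r hr).hasDerivAt
    have hN := (hbNdiff r hr).hasDerivAt
    have hL0 := (hbLpos r hr).ne'
    have hd1 := ((Real.hasDerivAt_rpow_const (x := r) (p := -δ) (Or.inl hr.ne')).div hL hL0).add
      (((((hN.div hL hL0).const_sub 1).const_mul n).mul hd).div (hasDerivAt_id r) hr.ne')
    have hd2 : HasDerivAt Q (r^(-δ) / (r^(2*α) * r) * T (bL r / r ^ (2*α)) (bN r / r ^ (2*α))
      (deriv bL r / r ^ (2*α - 1)) (deriv bN r / r ^ (2*α - 1))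
      (Φ r / r ^ (1 - 2*α - δ))) r := by
      refine hd1.congr_deriv ?_
      have h3 := (Real.rpow_pos_of_pos hr (2*α)).ne'
      have h4 := (Real.rpow_pos_of_pos hr (-δ)).ne'
      have : r ^ (1 - 2*α - δ) = r * r^(-δ) / r^(2*α) := by
        rw [show 1 - 2*α - δ = 1 + (-δ) - 2*α by ring, Real.rpow_sub hr, Real.rpow_add hr,
          Real.rpow_one]
      simp only [T, id, Pi.mul_apply, Pi.div_apply]
      rw [this, Real.rpow_sub_one hr.ne', Real.rpow_sub_one hr.ne']
      have hr0 := hr.ne'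
      generalize r^(-δ) = q at *
      generalize r^(2*α) = p at *
      field_simp
      ring
    refine ⟨hd2.differentiableAt, ?_⟩
    rw [hd2.deriv]
    exact mul_nonpos_of_nonneg_of_nonpos (by positivity) hneg.le
  obtain ⟨e, he, hev⟩ := mem_nhdsGT_iff_exists_Ioo_subset.1 hev
  refine ⟨e, he, fun r hr => hev hr, ?_⟩
  apply antitoneOn_of_deriv_nonpos (convex_Ioo 0 e)
  · exact fun r hr => (hev hr).1.continuousAt.continuousWithinAt
  · rw [interior_Ioo]
    exact fun r hr => (hev hr).1.differentiableWithinAt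
  · rw [interior_Ioo]
    exact fun r hr => (hev hr).2

/-- Monotonicity of the coefficient `q̃` near the origin: with
`Φ(r) = ∫₀^r (ρ^{−δ}/b_L(ρ)) exp(−(d−1)∫_ρ^r b_N(u)/(b_L(u)u) du) dρ` and
`q̃(r) = r^{−δ}/b_L(r) + (d−1)(1 − b_N(r)/b_L(r)) Φ(r)/r`,
there is `ℓ > 0` such that `q̃` is differentiable with nonpositive derivative on `(0,ℓ)`,
hence nonincreasing there. -/
theorem qtilde_decreasing (d : ℕ) (hd : 2 ≤ d) (α β δ : ℝ)
    (hα : α ∈ Ioo (0:ℝ) 1) (hβ : (2*α - 1) / ((d:ℝ) - 1) < β)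
    (hδ : δ ∈ Ioo (0:ℝ) (min (1 - α) (((d:ℝ) - 1) * β + 1 - 2*α)))
    (bL bN : ℝ → ℝ)
    (hbLpos : ∀ r, 0 < r → 0 < bL r)
    (hbLdiff : ∀ r, 0 < r → DifferentiableAt ℝ bL r)
    (hbNdiff : ∀ r, 0 < r → DifferentiableAt ℝ bN r)
    (hbLlim : Tendsto (fun r : ℝ => bL r / r ^ (2*α)) (nhdsWithin 0 (Ioi 0)) (nhds 1))
    (hbNlim : Tendsto (fun r : ℝ => bN r / r ^ (2*α)) (nhdsWithin 0 (Ioi 0)) (nhds β))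
    (hbLdlim : Tendsto (fun r : ℝ => deriv bL r / r ^ (2*α - 1)) (nhdsWithin 0 (Ioi 0))
      (nhds (2*α)))
    (hbNdlim : Tendsto (fun r : ℝ => deriv bN r / r ^ (2*α - 1)) (nhdsWithin 0 (Ioi 0))
      (nhds (2*α*β))) :
    ∃ ℓ : ℝ, 0 < ℓ ∧
      (∀ r ∈ Ioo (0:ℝ) ℓ,
        DifferentiableAt ℝ
          (fun r : ℝ => r ^ (-δ) / bL r +
            ((d:ℝ) - 1) * (1 - bN r / bL r) *
              (∫ ρ in Ioo (0:ℝ) r,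
                ρ ^ (-δ) / bL ρ *
                  Real.exp (-((d:ℝ) - 1) * ∫ u in ρ..r, bN u / (bL u * u))) / r) r ∧
        deriv
          (fun r : ℝ => r ^ (-δ) / bL r +
            ((d:ℝ) - 1) * (1 - bN r / bL r) *
              (∫ ρ in Ioo (0:ℝ) r,
                ρ ^ (-δ) / bL ρ *
                  Real.exp (-((d:ℝ) - 1) * ∫ u in ρ..r, bN u / (bL u * u))) / r) r ≤ 0) ∧
      AntitoneOn
        (fun r : ℝ => r ^ (-δ) / bL r +
          ((d:ℝ) - 1) * (1 - bN r / bL r) *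
            (∫ ρ in Ioo (0:ℝ) r,
              ρ ^ (-δ) / bL ρ *
                Real.exp (-((d:ℝ) - 1) * ∫ u in ρ..r, bN u / (bL u * u))) / r)
        (Ioo 0 ℓ) := by
  have hd' : (2:ℝ) ≤ d := by exact_mod_cast hd
  obtain ⟨hδ0, hδ1⟩ := hδ
  obtain ⟨hδ1, hδ2⟩ := lt_min_iff.1 hδ1
  obtain ⟨h1, h2⟩ := aux_phi ((d:ℝ)-1) α β δ (((d:ℝ)-1) * β + 1 - 2*α - δ) (by linarith) rfl
    bL bN hbLpos hbLdiff hbNdiff hbLlim hbNlim _ rfl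
  exact aux_main_s3 ((d:ℝ)-1) α β δ (((d:ℝ)-1) * β + 1 - 2*α - δ) (by linarith) hα.1 hδ0 hδ1
    (by linarith) rfl bL bN hbLpos hbLdiff hbNdiff hbLlim hbNlim hbLdlim hbNdlim _ h1 h2
end

section
/- Let d ≥ 1, let (Ω,P) be a probability space and f : Ω × ℝ^d → ℝ jointly measurable with E[∫_{ℝ^d} f(ω,x)² dx] < ∞; let F(z) := E[∫_{ℝ^d} f(ω,x+z) f(ω,x) dx] be its two-point self-correlation function. Let s ∈ (0,1], l > 0 and suppose M := sup_{0<|z|<l} |F(z)−F(0)| / |z|^{2s} < ∞. Then for every δ ∈ (0,s) there is a constant C depending only on d, s, δ and l such that E[ ∫_{ℝ^d} ∫_{ℝ^d} |f(ω,x+z) − f(ω,x)|² / |z|^{d+2(s−δ)} dz dx ] ≤ C ( M + E[∫_{ℝ^d} f(ω,x)² dx] ). -/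
open MeasureTheory
open scoped ENNReal

lemma aux_near (d : ℕ) (hd : 1 ≤ d) (s δ l : ℝ) (hs : 0 < s) (hδ : 0 < δ) :
    (∫⁻ z in Metric.ball (0 : EuclideanSpace ℝ (Fin d)) l,
      ENNReal.ofReal (‖z‖ ^ (2*s) / ‖z‖ ^ ((d:ℝ) + 2*(s - δ)))) < ⊤ := by
  have h : IntegrableOn (fun z : EuclideanSpace ℝ (Fin d) =>
      ‖z‖ ^ (2*s) / ‖z‖ ^ ((d:ℝ) + 2*(s - δ))) (Metric.ball 0 l) volume := by
    refine integrableOn_ball_of_norm_le_rpow (C := 1) (α := d - 2*δ) (by simpa using hd)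
      (by simp [hδ]) (Filter.Eventually.of_forall fun z => ?_) ?_
    · rw [Real.norm_of_nonneg (by positivity), one_mul]
      rcases (norm_nonneg z).eq_or_lt with h0 | h0
      · rw [← h0, Real.zero_rpow (by positivity), zero_div]; positivity
      · rw [← Real.rpow_sub h0]
        apply le_of_eq; congr 1; ring
    · exact Measurable.aestronglyMeasurable (by fun_prop)
  refine lt_of_le_of_lt (lintegral_mono fun z => ?_) h.2
  exact Real.ofReal_le_enorm _

lemma aux_far (d : ℕ) (s δ l : ℝ) (hδ : 0 < δ) (hs : δ < s) (hl : 0 < l) :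
    (∫⁻ z in (Metric.ball (0 : EuclideanSpace ℝ (Fin d)) l)ᶜ,
      ENNReal.ofReal (1 / ‖z‖ ^ ((d:ℝ) + 2*(s - δ)))) < ⊤ := by
  set a : ℝ := (d:ℝ) + 2*(s - δ) with ha
  have had : (d:ℝ) < a := by linarith
  have ha0 : 0 ≤ a := le_trans (Nat.cast_nonneg d) had.le
  have h1 : Integrable (fun z : EuclideanSpace ℝ (Fin d) => (1/l+1)^a * (1 + ‖z‖) ^ (-a)) volume :=
    (integrable_one_add_norm (by simpa using had)).const_mul _
  refine lt_of_le_of_lt (le_trans (setLIntegral_mono' (g := fun z => ENNReal.ofReal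
    ((1/l+1)^a * (1 + ‖z‖) ^ (-a))) measurableSet_ball.compl fun z hz => ?_)
    (setLIntegral_le_lintegral _ _)) (lt_of_le_of_lt (lintegral_mono fun z =>
      Real.ofReal_le_enorm _) h1.2)
  have hz' : l ≤ ‖z‖ := by simpa using hz
  have hz0 : 0 < ‖z‖ := hl.trans_le hz'
  apply ENNReal.ofReal_le_ofReal
  rw [Real.rpow_neg (by positivity), ← div_eq_mul_inv,
    div_le_div_iff₀ (by positivity) (by positivity), one_mul,
    ← Real.mul_rpow (by positivity) (by positivity)]
  apply Real.rpow_le_rpow (by positivity) _ ha0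
  have : 1 ≤ 1/l * ‖z‖ := by rw [one_div, inv_mul_eq_div, one_le_div hl]; exact hz'
  linarith

section
variable {d : ℕ} {Ω : Type} [MeasurableSpace Ω] (P : Measure Ω) [IsProbabilityMeasure P]

lemma aux_mp (z : EuclideanSpace ℝ (Fin d)) :
    MeasurePreserving (fun p : Ω × EuclideanSpace ℝ (Fin d) => (p.1, p.2 + z))
      (P.prod volume) (P.prod volume) :=
  (MeasurePreserving.id P).prod (measurePreserving_add_right volume z)

lemma aux_global (f : Ω × EuclideanSpace ℝ (Fin d) → ℝ) (hf : Measurable f)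
    (z : EuclideanSpace ℝ (Fin d)) :
    ∫⁻ p, ENNReal.ofReal ((f (p.1, p.2 + z) - f p) ^ 2) ∂(P.prod volume) ≤
      4 * ∫⁻ p, ENNReal.ofReal (f p ^ 2) ∂(P.prod volume) := by
  have hg : Measurable fun p => ENNReal.ofReal (f p ^ 2) := by fun_prop
  have h1 := (aux_mp P z).lintegral_comp hg
  calc _ ≤ ∫⁻ p, (2 * ENNReal.ofReal (f (p.1, p.2 + z) ^ 2) + 2 * ENNReal.ofReal (f p ^ 2))
        ∂(P.prod volume) := by
        refine lintegral_mono fun p => ?_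
        generalize f (p.1, p.2 + z) = u
        generalize f p = v
        have e2 : (2 : ℝ≥0∞) = ENNReal.ofReal 2 := by simp
        rw [e2, ← ENNReal.ofReal_mul (by norm_num), ← ENNReal.ofReal_mul (by norm_num),
          ← ENNReal.ofReal_add (by positivity) (by positivity)]
        apply ENNReal.ofReal_le_ofReal
        nlinarith [sq_nonneg (u + v)]
    _ = _ := by
        rw [lintegral_add_right _ (by fun_prop), lintegral_const_mul _ (by fun_prop),
          lintegral_const_mul _ (by fun_prop), h1, ← add_mul]
        norm_num

lemma aux_local (f : Ω × EuclideanSpace ℝ (Fin d) → ℝ) (hf : Measurable f)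
    (hfin : ∫⁻ p, ENNReal.ofReal (f p ^ 2) ∂(P.prod volume) < ⊤)
    (z : EuclideanSpace ℝ (Fin d)) :
    ∫⁻ p, ENNReal.ofReal ((f (p.1, p.2 + z) - f p) ^ 2) ∂(P.prod volume) =
      ENNReal.ofReal (2 * ((∫ ω, ∫ x, f (ω, x) * f (ω, x) ∂volume ∂P)
        - ∫ ω, ∫ x, f (ω, x + z) * f (ω, x) ∂volume ∂P)) := by
  have hmp := aux_mp P z
  have hL : MemLp f 2 (P.prod volume) := by
    rw [memLp_two_iff_integrable_sq hf.aestronglyMeasurable]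
    refine ⟨by fun_prop, ?_⟩
    rw [hasFiniteIntegral_iff_ofReal (Filter.Eventually.of_forall fun _ => by positivity)]
    exact hfin
  have hLz : MemLp (fun p : Ω × EuclideanSpace ℝ (Fin d) => f (p.1, p.2 + z)) 2
      (P.prod volume) := hL.comp_measurePreserving hmp
  have i0 : Integrable (fun p => f p * f p) (P.prod volume) := hL.integrable_mul hL
  have iz : Integrable (fun p : Ω × EuclideanSpace ℝ (Fin d) =>
    f (p.1, p.2 + z) * f (p.1, p.2 + z)) (P.prod volume) := hLz.integrable_mul hLz
  have ic : Integrable (fun p : Ω × EuclideanSpace ℝ (Fin d) =>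
    f (p.1, p.2 + z) * f p) (P.prod volume) := hLz.integrable_mul hL
  have hi : ∫ p : Ω × EuclideanSpace ℝ (Fin d), f (p.1, p.2 + z) * f (p.1, p.2 + z)
      ∂(P.prod volume) = ∫ p, f p * f p ∂(P.prod volume) := by
    have hm : AEStronglyMeasurable (fun p => f p * f p) (Measure.map
      (fun p : Ω × EuclideanSpace ℝ (Fin d) => (p.1, p.2 + z)) (P.prod volume)) :=
      (hf.mul hf).aestronglyMeasurable
    have := integral_map hmp.measurable.aemeasurable hm
    rw [hmp.map_eq] at this
    exact this.symm
  have hsq : ∀ p : Ω × EuclideanSpace ℝ (Fin d), (f (p.1, p.2 + z) - f p) ^ 2 =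
      f (p.1, p.2 + z) * f (p.1, p.2 + z) + f p * f p - 2 * (f (p.1, p.2 + z) * f p) :=
    fun p => by ring
  have ii : Integrable (fun p : Ω × EuclideanSpace ℝ (Fin d) =>
      (f (p.1, p.2 + z) - f p) ^ 2) (P.prod volume) := by
    simp_rw [hsq]
    exact (iz.add i0).sub (ic.const_mul 2)
  rw [← ofReal_integral_eq_lintegral_ofReal ii
    (Filter.Eventually.of_forall fun _ => by positivity)]
  congr 1
  have e0 := integral_prod _ i0
  have ec := integral_prod _ ic
  simp only at e0 ec
  rw [← e0, ← ec]
  simp_rw [hsq]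
  rw [integral_sub (by exact iz.add i0) (ic.const_mul 2), integral_add iz i0, hi,
    integral_const_mul]
  ring

lemma aux_fubini (f : Ω × EuclideanSpace ℝ (Fin d) → ℝ) (hf : Measurable f) (a : ℝ) :
    (∫⁻ ω, ∫⁻ x, ∫⁻ z, ENNReal.ofReal ((f (ω, x + z) - f (ω, x)) ^ 2 / ‖z‖ ^ a)
      ∂volume ∂volume ∂P) =
    ∫⁻ z : EuclideanSpace ℝ (Fin d), (∫⁻ p, ENNReal.ofReal ((f (p.1, p.2 + z) - f p) ^ 2)
      ∂(P.prod volume)) * ENNReal.ofReal (1 / ‖z‖ ^ a) := by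
  have hm : Measurable (fun q : (Ω × EuclideanSpace ℝ (Fin d)) × EuclideanSpace ℝ (Fin d) =>
      ENNReal.ofReal ((f (q.1.1, q.1.2 + q.2) - f q.1) ^ 2 / ‖q.2‖ ^ a)) := by fun_prop
  have h1 := lintegral_prod (μ := P) (ν := (volume : Measure (EuclideanSpace ℝ (Fin d))))
    (fun p => ∫⁻ z, ENNReal.ofReal ((f (p.1, p.2 + z) - f p) ^ 2 / ‖z‖ ^ a))
    (hm.lintegral_prod_right').aemeasurable
  simp only at h1
  rw [← h1, lintegral_lintegral_swap (by exact hm.aemeasurable)]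
  refine lintegral_congr fun z => ?_
  rw [← lintegral_mul_const _ (by fun_prop)]
  refine lintegral_congr fun p => ?_
  rw [← ENNReal.ofReal_mul (by positivity), mul_one_div]

end

/-- Sobolev–Hölder transfer lemma, part (1): if the two-point self-correlation function
`F(z) = E[∫ f(·,x+z) f(·,x) dx]` of a random field `f ∈ L²(Ω; L²(ℝ^d))` satisfies
`|F(z) − F(0)| ≤ M |z|^{2s}` for `0 < |z| < l`, then for every `δ ∈ (0,s)` the expected squared
Gagliardo `H^{s−δ}`-seminorm of `f` is bounded by `C (M + E[‖f‖²_{L²}])`, with `C = C(d,s,δ,l)`. -/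
theorem selfcorrelation_to_sobolev (d : ℕ) (hd : 1 ≤ d) (s δ l : ℝ)
    (hs : s ∈ Set.Ioc (0:ℝ) 1) (hδ : δ ∈ Set.Ioo (0:ℝ) s) (hl : 0 < l) :
    ∃ C : ℝ, 0 < C ∧
      ∀ (Ω : Type) (_ : MeasurableSpace Ω) (P : Measure Ω),
        IsProbabilityMeasure P →
        ∀ f : Ω × EuclideanSpace ℝ (Fin d) → ℝ, Measurable f →
        (∫⁻ ω, ∫⁻ x, ENNReal.ofReal (f (ω, x) ^ 2) ∂volume ∂P) < ⊤ →
        ∀ M : ℝ,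
        (∀ z : EuclideanSpace ℝ (Fin d), 0 < ‖z‖ → ‖z‖ < l →
          |(∫ ω, ∫ x, f (ω, x + z) * f (ω, x) ∂volume ∂P) -
              ∫ ω, ∫ x, f (ω, x) * f (ω, x) ∂volume ∂P| ≤ M * ‖z‖ ^ (2*s)) →
        (∫⁻ ω, ∫⁻ x, ∫⁻ z,
            ENNReal.ofReal ((f (ω, x + z) - f (ω, x)) ^ 2 / ‖z‖ ^ ((d:ℝ) + 2*(s - δ)))
              ∂volume ∂volume ∂P) ≤
          ENNReal.ofReal C *
            (ENNReal.ofReal M +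
              ∫⁻ ω, ∫⁻ x, ENNReal.ofReal (f (ω, x) ^ 2) ∂volume ∂P) := by
  obtain ⟨hs0, hs1⟩ := hs
  obtain ⟨hδ0, hδs⟩ := hδ
  have hK := aux_near d hd s δ l hs0 hδ0
  have hN := aux_far d s δ l hδ0 hδs hl
  set K := ∫⁻ z in Metric.ball (0 : EuclideanSpace ℝ (Fin d)) l,
      ENNReal.ofReal (‖z‖ ^ (2*s) / ‖z‖ ^ ((d:ℝ) + 2*(s - δ))) with hKdef
  set N := ∫⁻ z in (Metric.ball (0 : EuclideanSpace ℝ (Fin d)) l)ᶜ,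
      ENNReal.ofReal (1 / ‖z‖ ^ ((d:ℝ) + 2*(s - δ))) with hNdef
  refine ⟨2 * K.toReal + 4 * N.toReal + 1, by positivity, ?_⟩
  intro Ω _ P hP f hf hfin M hM
  have hC : ENNReal.ofReal (2 * K.toReal + 4 * N.toReal + 1) = 2 * K + 4 * N + 1 := by
    rw [ENNReal.ofReal_add (by positivity) (by positivity),
      ENNReal.ofReal_add (by positivity) (by positivity),
      ENNReal.ofReal_mul (by norm_num), ENNReal.ofReal_mul (by norm_num),
      ENNReal.ofReal_toReal hK.ne, ENNReal.ofReal_toReal hN.ne]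
    simp
  have hE := lintegral_prod (μ := P) (ν := (volume : Measure (EuclideanSpace ℝ (Fin d))))
    (fun p => ENNReal.ofReal (f p ^ 2)) (by fun_prop)
  rw [hC, aux_fubini P f hf, ← hE]
  rw [← hE] at hfin
  set E := ∫⁻ p, ENNReal.ofReal (f p ^ 2) ∂(P.prod volume) with hEdef
  set a : ℝ := (d:ℝ) + 2*(s - δ) with ha
  have ha0 : 0 < a := by
    have : (0:ℝ) ≤ d := Nat.cast_nonneg d
    linarith
  rw [← lintegral_add_compl _ (measurableSet_ball (x := (0 : EuclideanSpace ℝ (Fin d))) (ε := l))]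
  have hA : ∫⁻ z in Metric.ball (0 : EuclideanSpace ℝ (Fin d)) l,
      (∫⁻ p, ENNReal.ofReal ((f (p.1, p.2 + z) - f p) ^ 2) ∂(P.prod volume)) *
        ENNReal.ofReal (1 / ‖z‖ ^ a) ≤ 2 * ENNReal.ofReal M * K := by
    rw [hKdef, ← lintegral_const_mul _ (by fun_prop)]
    refine setLIntegral_mono' measurableSet_ball fun z hz => ?_
    have hzl : ‖z‖ < l := by simpa using hz
    rcases (norm_nonneg z).eq_or_lt with h0 | h0
    · simp [← h0, Real.zero_rpow ha0.ne']
    · have hb := hM z h0 hzl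
      rw [aux_local P f hf hfin z]
      calc _ ≤ ENNReal.ofReal (2 * (M * ‖z‖ ^ (2*s))) * ENNReal.ofReal (1 / ‖z‖ ^ a) := by
            gcongr
            linarith [neg_abs_le ((∫ ω, ∫ x, f (ω, x + z) * f (ω, x) ∂volume ∂P) -
              ∫ ω, ∫ x, f (ω, x) * f (ω, x) ∂volume ∂P)]
        _ = _ := by
            rw [div_eq_mul_one_div (‖z‖ ^ (2*s)), ENNReal.ofReal_mul (by norm_num),
              ENNReal.ofReal_mul' (by positivity), ENNReal.ofReal_mul (by positivity)]
            simp [mul_assoc]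
  have hB : ∫⁻ z in (Metric.ball (0 : EuclideanSpace ℝ (Fin d)) l)ᶜ,
      (∫⁻ p, ENNReal.ofReal ((f (p.1, p.2 + z) - f p) ^ 2) ∂(P.prod volume)) *
        ENNReal.ofReal (1 / ‖z‖ ^ a) ≤ 4 * E * N := by
    rw [hNdef, ← lintegral_const_mul _ (by fun_prop)]
    refine lintegral_mono fun z => ?_
    gcongr
    exact aux_global P f hf z
  calc _ ≤ 2 * ENNReal.ofReal M * K + 4 * E * N := add_le_add hA hB
    _ = (2 * K) * ENNReal.ofReal M + (4 * N) * E := by ring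
    _ ≤ (2 * K + 4 * N + 1) * ENNReal.ofReal M + (2 * K + 4 * N + 1) * E := by
        gcongr
        · rw [add_assoc]; exact le_self_add
        · rw [add_right_comm]; exact le_add_self
    _ = _ := by ring
end

section
/- Let d ≥ 2 be an integer and α ∈ (0,1); set γ := d/(1−α) and r := 2γ/(γ−2). There exists a constant C depending only on d and α such that for every G ∈ C_c^∞(ℝ^d; ℝ): ( ∫_{ℝ^d} |G(z)|^r dz )^{2/r} ≤ C ( ∫_{ℝ^d} min(1, |z|^{2α}) |∇G(z)|² dz + ∫_{ℝ^d} |G(z)|² dz ). -/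
open MeasureTheory

lemma wn_integrable {d : ℕ} {G F : EuclideanSpace ℝ (Fin d) → ℝ} (hG : HasCompactSupport G)
    (hF : Continuous F) (h : ∀ z, z ∉ tsupport G → F z = 0) : Integrable F :=
  hF.integrable_of_hasCompactSupport (HasCompactSupport.intro hG.isCompact h)

lemma wn_fderiv_zero {d : ℕ} {G : EuclideanSpace ℝ (Fin d) → ℝ} {z : EuclideanSpace ℝ (Fin d)}
    (hz : z ∉ tsupport G) : fderiv ℝ G z = 0 := by
  by_contra h
  exact hz (support_fderiv_subset ℝ (f := G) h)

lemma wn_euler {d : ℕ} {ψ : EuclideanSpace ℝ (Fin d) → ℝ} (h1 : ContDiff ℝ 1 ψ)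
    (h2 : HasCompactSupport ψ) : ∫ z, ((d : ℝ) * ψ z + fderiv ℝ ψ z z) = 0 := by
  have hc := h1.continuous
  have hcd := h1.continuous_fderiv one_ne_zero
  have key : ∀ i : Fin d, ∫ z : EuclideanSpace ℝ (Fin d),
      (ψ z + z i * fderiv ℝ ψ z (EuclideanSpace.single i 1)) = 0 := by
    intro i
    have hf : ∀ x : EuclideanSpace ℝ (Fin d), HasFDerivAt (fun z : EuclideanSpace ℝ (Fin d) => z i)
        (EuclideanSpace.proj i : EuclideanSpace ℝ (Fin d) →L[ℝ] ℝ) x := fun x =>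
      (EuclideanSpace.proj i : EuclideanSpace ℝ (Fin d) →L[ℝ] ℝ).hasFDerivAt
    have i1 : Integrable (fun z : EuclideanSpace ℝ (Fin d) => ψ z) :=
      wn_integrable h2 hc (fun z hz => image_eq_zero_of_notMem_tsupport hz)
    have i2 : Integrable (fun z : EuclideanSpace ℝ (Fin d) =>
        z i * fderiv ℝ ψ z (EuclideanSpace.single i 1)) :=
      wn_integrable h2 (by fun_prop) (fun z hz => by simp [wn_fderiv_zero hz])
    have i3 : Integrable (fun z : EuclideanSpace ℝ (Fin d) => z i * ψ z) :=
      wn_integrable h2 (by fun_prop) (fun z hz => by simp [image_eq_zero_of_notMem_tsupport hz])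
    have := integral_mul_fderiv_eq_neg_fderiv_mul_of_integrable (μ := volume)
      (f := fun z : EuclideanSpace ℝ (Fin d) => z i) (g := ψ) (v := EuclideanSpace.single i (1:ℝ))
      (by simpa [(hf _).fderiv] using i1) i2 i3 (fun x _ => (hf x).differentiableAt)
      (fun x _ => h1.differentiable one_ne_zero x)
    rw [integral_add i1 i2, this]
    simp [(hf _).fderiv]
  have : ∀ z : EuclideanSpace ℝ (Fin d), (d : ℝ) * ψ z + fderiv ℝ ψ z z =
      ∑ i, (ψ z + z i * fderiv ℝ ψ z (EuclideanSpace.single i 1)) := by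
    intro z
    rw [Finset.sum_add_distrib]
    congr 1
    · simp
    · generalize fderiv ℝ ψ z = T
      conv_lhs => rw [← (EuclideanSpace.basisFun (Fin d) ℝ).sum_repr z]
      simp
  simp_rw [this]
  rw [integral_finsetSum]
  · simp [key]
  · intro i _
    exact wn_integrable h2 (by fun_prop) (fun z hz => by
      simp [wn_fderiv_zero hz, image_eq_zero_of_notMem_tsupport hz])

/-- regularized weight -/
noncomputable def wnS (ε t : ℝ) : ℝ := (t + ε) / (1 + t)

lemma wnS_pos {ε t : ℝ} (hε : 0 < ε) (ht : 0 ≤ t) : 0 < wnS ε t := by unfold wnS; positivity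

lemma wn_P_deriv {ε t α : ℝ} (hε : 0 < ε) (ht : 0 ≤ t) :
    HasDerivAt (fun t => (t + ε) ^ (α - 1) * (1 + t) ^ (-α))
      ((t + ε) ^ (α - 1) * (1 + t) ^ (-α) * ((α - 1) / (t + ε) - α / (1 + t))) t := by
  have h1 : 0 < t + ε := by positivity
  have h2 : 0 < 1 + t := by positivity
  have := (((hasDerivAt_id t).add_const ε).rpow_const (p := α - 1) (Or.inl h1.ne')).mul
    (((hasDerivAt_id t).const_add 1).rpow_const (p := -α) (Or.inl h2.ne'))
  refine this.congr_deriv ?_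
  simp only [id]
  rw [Real.rpow_sub_one h1.ne' (α-1), Real.rpow_sub_one h2.ne' (-α)]
  field_simp
  ring

lemma wn_P_eq {ε t α : ℝ} (hε : 0 < ε) (ht : 0 ≤ t) :
    (t + ε) ^ (α - 1) * (1 + t) ^ (-α) = wnS ε t ^ (α - 1) / (1 + t) := by
  have h1 : 0 < t + ε := by positivity
  have h2 : 0 < 1 + t := by positivity
  unfold wnS
  rw [Real.div_rpow h1.le h2.le, Real.rpow_sub_one h2.ne' α, Real.rpow_neg h2.le]
  have := (Real.rpow_pos_of_pos h2 α).ne'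
  field_simp

lemma wn_S_low {ε t α : ℝ} (hε : 0 < ε) (ht : 0 ≤ t) (h0 : 0 < α) (h1 : α < 1) :
    wnS ε t ^ (α - 1) ≤ 4 * (wnS ε t ^ (α - 1) / (1 + t) ^ 2) + 2 := by
  have hS := wnS_pos hε ht
  have hw := Real.rpow_pos_of_pos hS (α - 1)
  rcases le_total t 1 with h | h
  · have : wnS ε t ^ (α - 1) ≤ 4 * (wnS ε t ^ (α - 1) / (1 + t) ^ 2) := by
      rw [← mul_div_assoc, le_div_iff₀ (by positivity)]
      have h4 : (1 + t) ^ 2 ≤ 4 := by nlinarith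
      nlinarith
    linarith
  · have hS2 : 1 / 2 ≤ wnS ε t := by
      unfold wnS; rw [div_le_div_iff₀ (by norm_num) (by positivity)]; linarith
    have : wnS ε t ^ (α - 1) ≤ 2 := by
      calc wnS ε t ^ (α - 1) ≤ (1 / 2 : ℝ) ^ (α - 1) :=
            Real.rpow_le_rpow_of_nonpos (by norm_num) hS2 (by linarith)
        _ = 2 ^ (1 - α) := by
            rw [one_div, Real.inv_rpow (by norm_num), ← Real.rpow_neg (by norm_num)]; ring_nf
        _ ≤ 2 ^ (1:ℝ) := Real.rpow_le_rpow_of_exponent_le (by norm_num) (by linarith)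
        _ = 2 := by norm_num
    have : 0 ≤ 4 * (wnS ε t ^ (α - 1) / (1 + t) ^ 2) := by positivity
    linarith

lemma wn_hardy_alg {d ε t α w S x y m : ℝ} (hd : 2 ≤ d) (hε : 0 < ε) (ht : 0 ≤ t) (h0 : 0 < α)
    (h1 : α < 1) (hS : S = (t + ε) / (1 + t)) (hw : 0 < w) (hlow : w ≤ 4 * (w / (1 + t) ^ 2) + 2)
    (hy : 0 ≤ y) (hm : |m| ≤ y * Real.sqrt t) :
    α * (w * x ^ 2) ≤ 4 * ((d * (w / (1 + t)) +
      2 * t * (w / (1 + t) * ((α - 1) / (t + ε) - α / (1 + t)))) * x ^ 2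
        + 2 * (w / (1 + t)) * x * m) + 16 / α * (w * S * y ^ 2) + 4 * α * x ^ 2 := by
  have p1 : 0 < t + ε := by positivity
  have p2 : 0 < 1 + t := by positivity
  have e1 : 2 * α * (w / (1 + t) ^ 2) ≤ (d * (w / (1 + t)) +
      2 * t * (w / (1 + t) * ((α - 1) / (t + ε) - α / (1 + t)))) := by
    have q : 2 * α / (1 + t) ≤ d + 2 * t * ((α - 1) / (t + ε) - α / (1 + t)) := by
      have a1 : t / (t + ε) ≤ 1 := by rw [div_le_one p1]; linarith
      have a2 : 2 * α / (1 + t) = 2 * α - 2 * t * (α / (1 + t)) := by field_simp; ring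
      have a3 : 2 * t * ((α - 1) / (t + ε)) = -(2 * (1 - α)) * (t / (t + ε)) := by ring
      rw [mul_sub, a2, a3]
      nlinarith
    have := mul_le_mul_of_nonneg_left q (div_pos hw p2).le
    calc _ = w / (1 + t) * (2 * α / (1 + t)) := by field_simp
      _ ≤ _ := this
      _ = _ := by ring
  have e2 : |w / (1 + t) * x * m| ≤ w * (Real.sqrt S * y * |x|) := by
    have hs : Real.sqrt t / (1 + t) ≤ Real.sqrt S := by
      apply Real.le_sqrt_of_sq_le
      rw [div_pow, Real.sq_sqrt ht, hS, div_le_div_iff₀ (by positivity) p2]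
      nlinarith [mul_nonneg ht p2.le, mul_pos hε p2, mul_nonneg ht (mul_nonneg ht p2.le),
        mul_nonneg ht (mul_pos hε p2).le]
    rw [abs_mul, abs_mul, abs_of_pos (div_pos hw p2)]
    calc w / (1 + t) * |x| * |m| ≤ w / (1 + t) * |x| * (y * Real.sqrt t) := by gcongr
      _ = w * ((Real.sqrt t / (1 + t)) * y * |x|) := by ring
      _ ≤ _ := by gcongr
  have hS0 : 0 ≤ S := by rw [hS]; positivity
  have e3 : 8 * (Real.sqrt S * y * |x|) ≤ α * x ^ 2 + 16 / α * (S * y ^ 2) := by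
    have := sq_nonneg (α * |x| - 4 * (Real.sqrt S * y))
    have h4 : α * x ^ 2 + 16 / α * (S * y ^ 2) = (α ^ 2 * x ^ 2 + 16 * (S * y ^ 2)) / α := by
      field_simp
    rw [h4, le_div_iff₀ h0]
    have h5 := sq_abs x
    have h6 := Real.sq_sqrt hS0
    calc 8 * (Real.sqrt S * y * |x|) * α ≤ α ^ 2 * |x| ^ 2 + 16 * ((Real.sqrt S)^2 * y ^ 2) := by
          nlinarith
      _ = _ := by rw [h5, h6]
  have e4 := mul_le_mul_of_nonneg_left e3 hw.le
  have e5 := (abs_le.1 e2).1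
  have e6 := mul_le_mul_of_nonneg_right e1 (sq_nonneg x)
  have e7 := mul_le_mul_of_nonneg_right hlow (mul_nonneg h0.le (sq_nonneg x))
  nlinarith

lemma wn_hardy {d : ℕ} (hd : 2 ≤ d) {α ε : ℝ} (h0 : 0 < α) (h1 : α < 1) (hε : 0 < ε)
    {u : EuclideanSpace ℝ (Fin d) → ℝ} (hu : ContDiff ℝ 1 u) (hc : HasCompactSupport u) :
    α * ∫ z, wnS ε (‖z‖ ^ 2) ^ (α - 1) * u z ^ 2 ≤
      16 / α * (∫ z, wnS ε (‖z‖ ^ 2) ^ α * ‖fderiv ℝ u z‖ ^ 2) + 4 * α * ∫ z, u z ^ 2 := by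
  set P : ℝ → ℝ := fun t => (t + ε) ^ (α - 1) * (1 + t) ^ (-α) with hP
  set ψ : EuclideanSpace ℝ (Fin d) → ℝ := fun z => P (‖z‖ ^ 2) * u z ^ 2 with hψ
  have hψ1 : ContDiff ℝ 1 ψ := by
    apply ContDiff.mul _ (hu.pow 2)
    apply ContDiff.mul
    · exact ContDiff.rpow_const_of_ne ((contDiff_norm_sq ℝ).add contDiff_const)
        (fun x => by positivity)
    · exact ContDiff.rpow_const_of_ne (contDiff_const.add (contDiff_norm_sq ℝ))
        (fun x => by positivity)
  have hu0 := hu.continuous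
  have hud := hu.continuous_fderiv one_ne_zero
  have hψc : HasCompactSupport ψ := HasCompactSupport.intro hc.isCompact (fun z hz => by
    simp [hψ, image_eq_zero_of_notMem_tsupport hz])
  have hSc : Continuous (fun z : EuclideanSpace ℝ (Fin d) => wnS ε (‖z‖ ^ 2)) := by
    unfold wnS
    exact Continuous.div (by fun_prop) (by fun_prop) (fun z => by positivity)
  have hSp : ∀ s : ℝ, Continuous (fun z : EuclideanSpace ℝ (Fin d) => wnS ε (‖z‖ ^ 2) ^ s) := fun s =>
    hSc.rpow_const (fun z => Or.inl (wnS_pos hε (by positivity)).ne')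
  have iA : Integrable (fun z => wnS ε (‖z‖ ^ 2) ^ (α - 1) * u z ^ 2) :=
    wn_integrable hc ((hSp _).mul (by fun_prop)) (fun z hz => by
      simp [image_eq_zero_of_notMem_tsupport hz])
  have iD : Integrable (fun z => wnS ε (‖z‖ ^ 2) ^ α * ‖fderiv ℝ u z‖ ^ 2) :=
    wn_integrable hc ((hSp _).mul (by fun_prop)) (fun z hz => by simp [wn_fderiv_zero hz])
  have iM : Integrable (fun z => u z ^ 2) :=
    wn_integrable hc (by fun_prop) (fun z hz => by simp [image_eq_zero_of_notMem_tsupport hz])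
  have iψ : Integrable (fun z => (d : ℝ) * ψ z + fderiv ℝ ψ z z) := by
    have := hψ1.continuous
    have := hψ1.continuous_fderiv one_ne_zero
    exact wn_integrable hψc (by fun_prop) (fun z hz => by
      simp [image_eq_zero_of_notMem_tsupport hz, wn_fderiv_zero hz])
  have hE := wn_euler hψ1 hψc
  have hpt : ∀ z, α * (wnS ε (‖z‖ ^ 2) ^ (α - 1) * u z ^ 2) ≤
      4 * ((d : ℝ) * ψ z + fderiv ℝ ψ z z) + 16 / α * (wnS ε (‖z‖ ^ 2) ^ α * ‖fderiv ℝ u z‖ ^ 2)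
        + 4 * α * u z ^ 2 := by
    intro z
    have ht : 0 ≤ ‖z‖ ^ 2 := by positivity
    have hSz := wnS_pos hε ht
    have d1 : HasFDerivAt (fun z : EuclideanSpace ℝ (Fin d) => ‖z‖ ^ 2) _ z :=
      (hasStrictFDerivAt_norm_sq z).hasFDerivAt
    have d2 := (wn_P_deriv (α := α) hε ht).comp_hasFDerivAt z d1
    have d3 := d2.mul ((hu.differentiable one_ne_zero z).hasFDerivAt.pow 2)
    have d4 : fderiv ℝ ψ z = _ := HasFDerivAt.fderiv d3
    have d5 : (d : ℝ) * ψ z + fderiv ℝ ψ z z =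
      ((d * P (‖z‖ ^ 2) + 2 * ‖z‖ ^ 2 *
      (P (‖z‖^2) * ((α - 1) / (‖z‖ ^ 2 + ε) - α / (1 + ‖z‖ ^ 2)))) * u z ^ 2
        + 2 * P (‖z‖ ^ 2) * u z * fderiv ℝ u z z) := by
      rw [d4]
      simp [hψ, hP]
      ring
    have hPe : P (‖z‖ ^ 2) = _ := wn_P_eq hε ht
    rw [d5, hPe]
    have := wn_hardy_alg (d := d) (x := u z) (S := wnS ε (‖z‖ ^ 2)) (y := ‖fderiv ℝ u z‖)
      (m := fderiv ℝ u z z) (by exact_mod_cast hd) hε ht h0 h1 rfl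
      (Real.rpow_pos_of_pos hSz (α - 1)) (wn_S_low hε ht h0 h1) (norm_nonneg _) (by
        rw [Real.sqrt_sq (norm_nonneg _)]
        exact (fderiv ℝ u z).le_opNorm z)
    have e : wnS ε (‖z‖ ^ 2) ^ (α - 1) * wnS ε (‖z‖ ^ 2) = wnS ε (‖z‖ ^ 2) ^ α := by
      rw [← Real.rpow_add_one hSz.ne']; ring_nf
    rw [e] at this
    exact this
  have := integral_mono (iA.const_mul α)
    (((iψ.const_mul 4).add (iD.const_mul (16 / α))).add (iM.const_mul (4 * α))) hpt
  rw [integral_add' ((iψ.const_mul 4).add (iD.const_mul (16 / α))) (iM.const_mul (4 * α)),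
    integral_add' (iψ.const_mul 4) (iD.const_mul (16 / α))] at this
  simp only [integral_const_mul] at this
  rw [hE] at this
  linarith

lemma wn_gns {d : ℕ} (p : ℝ) (hp : Real.HolderConjugate (d : ℝ) p) :
    ∃ C : ℝ, 0 < C ∧ ∀ f : EuclideanSpace ℝ (Fin d) → ℝ, ContDiff ℝ 1 f → HasCompactSupport f →
      (∀ z, 0 ≤ f z) → ∫ z, f z ^ p ≤ C * (∫ z, ‖fderiv ℝ f z‖) ^ p := by
  set C0 := lintegralPowLePowLIntegralFDerivConst
    (volume : Measure (EuclideanSpace ℝ (Fin d))) p with hC0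
  have hp0 : 0 < p := hp.symm.pos
  refine ⟨C0 + 1, by positivity, fun f hf hc hn => ?_⟩
  have hfd := hf.continuous_fderiv one_ne_zero
  have hf0 := hf.continuous
  have i1 : Integrable (fun z => f z ^ p) :=
    wn_integrable hc (hf0.rpow_const (fun _ => Or.inr hp0.le)) (fun z hz => by
      simp [image_eq_zero_of_notMem_tsupport hz, hp0.ne'])
  have i2 : Integrable (fderiv ℝ f) :=
    hfd.integrable_of_hasCompactSupport (hc.fderiv ℝ)
  have key := lintegral_pow_le_pow_lintegral_fderiv
    (volume : Measure (EuclideanSpace ℝ (Fin d))) hf hc (p := p) (by simpa using hp)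
  rw [← hC0, ← ofReal_integral_norm_eq_lintegral_enorm i2] at key
  have e : ∫⁻ z, ‖f z‖ₑ ^ p = ENNReal.ofReal (∫ z, f z ^ p) := by
    rw [ofReal_integral_eq_lintegral_ofReal i1
      (Filter.Eventually.of_forall fun z => Real.rpow_nonneg (hn z) p)]
    refine lintegral_congr fun z => ?_
    rw [← ENNReal.ofReal_rpow_of_nonneg (hn z) hp0.le, Real.enorm_eq_ofReal (hn z)]
  have hI : 0 ≤ ∫ z, ‖fderiv ℝ f z‖ := integral_nonneg fun _ => norm_nonneg _
  rw [e, ENNReal.ofReal_rpow_of_nonneg hI hp0.le, ← ENNReal.ofReal_coe_nnreal,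
    ← ENNReal.ofReal_mul C0.coe_nonneg, ENNReal.ofReal_le_ofReal_iff (by positivity)] at key
  refine key.trans ?_
  gcongr
  linarith

lemma wn_S_deriv {ε t s : ℝ} (hε : 0 < ε) (ht : 0 ≤ t) :
    HasDerivAt (fun t => wnS ε t ^ s)
      (s * wnS ε t ^ (s - 1) * ((1 - ε) / (1 + t) ^ 2)) t := by
  have h2 : 0 < 1 + t := by positivity
  have h := (((hasDerivAt_id t).add_const ε).div ((hasDerivAt_id t).const_add 1) h2.ne')
  have h' : HasDerivAt (wnS ε) ((1 - ε) / (1 + t) ^ 2) t := by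
    refine HasDerivAt.congr_deriv h ?_
    simp only [id]
    ring
  refine (h'.rpow_const (p := s) (Or.inl (wnS_pos hε ht).ne')).congr_deriv ?_
  ring

lemma wn_f_contDiff {d : ℕ} {α ε q : ℝ} (hε : 0 < ε) (hq : 1 < q)
    {u : EuclideanSpace ℝ (Fin d) → ℝ} (hu : ContDiff ℝ 1 u) :
    ContDiff ℝ 1 (fun z => wnS ε (‖z‖ ^ 2) ^ (α / 2) * ‖u z‖ ^ q) := by
  apply ContDiff.mul _ (hu.norm_rpow hq)
  apply ContDiff.rpow_const_of_ne
  · unfold wnS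
    apply ContDiff.div ((contDiff_norm_sq ℝ).add contDiff_const)
      (contDiff_const.add (contDiff_norm_sq ℝ)) (fun x => by positivity)
  · intro x
    exact (wnS_pos hε (by positivity)).ne'

lemma wn_f_bound {d : ℕ} {α ε q : ℝ} (h0 : 0 < α) (hε : 0 < ε) (hε1 : ε ≤ 1) (hq : 1 < q)
    {u : EuclideanSpace ℝ (Fin d) → ℝ} (hu : ContDiff ℝ 1 u) (z : EuclideanSpace ℝ (Fin d)) :
    ‖fderiv ℝ (fun z => wnS ε (‖z‖ ^ 2) ^ (α / 2) * ‖u z‖ ^ q) z‖ ≤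
      |u z| ^ (q - 1) * (α * wnS ε (‖z‖ ^ 2) ^ ((α - 1) / 2) * |u z| +
        q * wnS ε (‖z‖ ^ 2) ^ (α / 2) * ‖fderiv ℝ u z‖) := by
  have ht : 0 ≤ ‖z‖ ^ 2 := by positivity
  have hS := wnS_pos hε ht
  have d1 : HasFDerivAt (fun z : EuclideanSpace ℝ (Fin d) => ‖z‖ ^ 2) _ z :=
    (hasStrictFDerivAt_norm_sq z).hasFDerivAt
  have d2 := (wn_S_deriv (s := α / 2) hε ht).comp_hasFDerivAt z d1
  have d3 := d2.mul (((hu.norm_rpow hq).differentiable one_ne_zero) z).hasFDerivAt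
  have d4 : fderiv ℝ (fun z => wnS ε (‖z‖ ^ 2) ^ (α / 2) * ‖u z‖ ^ q) z = _ := d3.fderiv
  have b1 := norm_fderiv_norm_rpow_le (hu.differentiable one_ne_zero) (x := z) hq
  have hsq : (1 - ε) / (1 + ‖z‖ ^ 2) ^ 2 * ‖z‖ ≤ wnS ε (‖z‖ ^ 2) ^ (1 / 2 : ℝ) := by
    rw [← Real.sqrt_eq_rpow]
    apply Real.le_sqrt_of_sq_le
    have a1 : (1 - ε) / (1 + ‖z‖ ^ 2) ^ 2 * ‖z‖ ≤ 1 / (1 + ‖z‖ ^ 2) * ‖z‖ := by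
      gcongr
      · linarith
      · nlinarith
    have a0 : 0 ≤ (1 - ε) / (1 + ‖z‖ ^ 2) ^ 2 * ‖z‖ := by
      have : 0 ≤ 1 - ε := by linarith
      positivity
    calc _ ≤ (1 / (1 + ‖z‖ ^ 2) * ‖z‖) ^ 2 := by gcongr
      _ = ‖z‖ ^ 2 / (1 + ‖z‖ ^ 2) * (1 / (1 + ‖z‖ ^ 2)) := by ring
      _ ≤ ‖z‖ ^ 2 / (1 + ‖z‖ ^ 2) * 1 := by
          gcongr
          rw [div_le_one (by positivity)]; linarith
      _ ≤ _ := by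
          unfold wnS
          rw [mul_one]
          gcongr
          linarith
  have b2 : ‖(α / 2 * wnS ε (‖z‖ ^ 2) ^ (α / 2 - 1) * ((1 - ε) / (1 + ‖z‖ ^ 2) ^ 2)) •
      ((2 : ℕ) • (innerSL ℝ z : EuclideanSpace ℝ (Fin d) →L[ℝ] ℝ))‖
        ≤ α * wnS ε (‖z‖ ^ 2) ^ ((α - 1) / 2) := by
    have hw := Real.rpow_pos_of_pos hS (α / 2 - 1)
    have h1e : 0 ≤ 1 - ε := by linarith
    rw [norm_smul, Real.norm_of_nonneg (by positivity)]
    have : ‖(2 : ℕ) • (innerSL ℝ z : EuclideanSpace ℝ (Fin d) →L[ℝ] ℝ)‖ ≤ 2 * ‖z‖ := by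
      refine (norm_nsmul_le (n := 2)).trans ?_
      rw [innerSL_apply_norm]
      norm_num
    calc _ ≤ α / 2 * wnS ε (‖z‖ ^ 2) ^ (α / 2 - 1) * ((1 - ε) / (1 + ‖z‖ ^ 2) ^ 2) * (2 * ‖z‖) := by
          gcongr
      _ = α * wnS ε (‖z‖ ^ 2) ^ (α / 2 - 1) * ((1 - ε) / (1 + ‖z‖ ^ 2) ^ 2 * ‖z‖) := by ring
      _ ≤ α * wnS ε (‖z‖ ^ 2) ^ (α / 2 - 1) * wnS ε (‖z‖ ^ 2) ^ (1 / 2 : ℝ) := by gcongr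
      _ = _ := by
          rw [mul_assoc, ← Real.rpow_add hS]
          ring_nf
  rw [d4]
  refine (norm_add_le _ _).trans ?_
  rw [norm_smul, norm_smul]
  have hw := Real.rpow_pos_of_pos hS (α / 2)
  have hun : 0 ≤ ‖u z‖ ^ q := by positivity
  have e1 : ‖(fun t => wnS ε t ^ (α / 2)) (‖z‖ ^ 2)‖ = wnS ε (‖z‖ ^ 2) ^ (α / 2) :=
    Real.norm_of_nonneg hw.le
  have e2 : |u z| ^ q = |u z| ^ (q - 1) * |u z| := by
    rcases eq_or_ne (u z) 0 with h | h
    · simp [h, (by linarith : q ≠ 0)]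
    · rw [← Real.rpow_add_one (abs_ne_zero.2 h)]; ring_nf
  rw [Real.norm_of_nonneg hun]
  simp only [Function.comp, Real.norm_of_nonneg hw.le]
  calc _ ≤ wnS ε (‖z‖ ^ 2) ^ (α / 2) * (q * ‖u z‖ ^ (q - 1) * ‖fderiv ℝ u z‖) +
        ‖u z‖ ^ q * (α * wnS ε (‖z‖ ^ 2) ^ ((α - 1) / 2)) := by gcongr
    _ = _ := by
        rw [Real.norm_eq_abs, e2]; ring

lemma wn_final {A B J H N E K1 K2 C p θ β r : ℝ} (hA : 0 ≤ A) (hB : 0 ≤ B) (hJ : 0 ≤ J)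
    (hH : 0 ≤ H) (hN : 0 ≤ N) (hE : 0 ≤ E) (hK1 : 0 < K1) (hK2 : 0 < K2) (hC : 0 < C)
    (hp : 0 < p) (hθ : 0 < θ) (hθ1 : θ < 1) (hβ : β = (1 - θ) * p / 2) (hβ1 : β < 1)
    (hr : 0 < r) (hrel : 2 / r * (θ + β) = 1 - β)
    (a1 : A ≤ K1 * E) (a2 : B ≤ C * J ^ p) (a3 : J ≤ N ^ (1 / 2 : ℝ) * H ^ (1 / 2 : ℝ))
    (a4 : H ≤ K2 * E) (a5 : N ≤ A ^ θ * B ^ (1 - θ)) :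
    N ^ (2 / r) ≤ (K1 ^ θ * C ^ (1 - θ) * K2 ^ β) ^ (1 / (θ + β)) * E := by
  have hβ0 : 0 < β := by rw [hβ]; have : 0 < 1 - θ := by linarith
                         positivity
  have h1θ : 0 < 1 - θ := by linarith
  rcases hN.eq_or_lt with h | hN0
  · rw [← h, Real.zero_rpow (by positivity)]; positivity
  have b1 : J ^ p ≤ N ^ (p / 2) * (K2 * E) ^ (p / 2) := by
    calc J ^ p ≤ (N ^ (1 / 2 : ℝ) * (K2 * E) ^ (1 / 2 : ℝ)) ^ p := by
          gcongr
          exact a3.trans (by gcongr)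
      _ = _ := by
          rw [Real.mul_rpow (by positivity) (by positivity), ← Real.rpow_mul hN,
            ← Real.rpow_mul (by positivity)]
          ring_nf
  have b2 : B ^ (1 - θ) ≤ C ^ (1 - θ) * (N ^ β * (K2 ^ β * E ^ β)) := by
    calc B ^ (1 - θ) ≤ (C * (N ^ (p / 2) * (K2 * E) ^ (p / 2))) ^ (1 - θ) := by
          gcongr
          exact a2.trans (by gcongr)
      _ = _ := by
          rw [Real.mul_rpow (by positivity) (by positivity),
            Real.mul_rpow (by positivity) (by positivity), ← Real.rpow_mul hN,
            ← Real.rpow_mul (by positivity), hβ, ← Real.mul_rpow hK2.le hE]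
          ring_nf
  have b3 : A ^ θ ≤ K1 ^ θ * E ^ θ := by
    rw [← Real.mul_rpow hK1.le hE]; gcongr
  have b4 : N ≤ (K1 ^ θ * C ^ (1 - θ) * K2 ^ β) * E ^ (θ + β) * N ^ β := by
    calc N ≤ _ := a5
      _ ≤ (K1 ^ θ * E ^ θ) * (C ^ (1 - θ) * (N ^ β * (K2 ^ β * E ^ β))) := by gcongr
      _ = _ := by rw [Real.rpow_add_of_nonneg hE hθ.le hβ0.le]; ring
  have b5 : N ^ (1 - β) ≤ (K1 ^ θ * C ^ (1 - θ) * K2 ^ β) * E ^ (θ + β) := by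
    rw [Real.rpow_sub hN0, Real.rpow_one, div_le_iff₀ (by positivity)]
    exact b4
  calc N ^ (2 / r) = (N ^ (1 - β)) ^ (1 / (θ + β)) := by
        rw [← Real.rpow_mul hN, ← hrel]
        congr 1
        field_simp
    _ ≤ ((K1 ^ θ * C ^ (1 - θ) * K2 ^ β) * E ^ (θ + β)) ^ (1 / (θ + β)) := by gcongr
    _ = _ := by
        rw [Real.mul_rpow (by positivity) (by positivity), ← Real.rpow_mul hE,
          mul_one_div_cancel (by positivity), Real.rpow_one]

set_option maxHeartbeats 2000000 in
lemma wn_core {d : ℕ} (hd : 2 ≤ d) {α r : ℝ} (h0 : 0 < α) (h1 : α < 1)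
    (hr : r = 2 * d / (d - 2 + 2 * α)) :
    ∃ C : ℝ, 0 < C ∧ ∀ ε : ℝ, 0 < ε → ε ≤ 1 → ∀ u : EuclideanSpace ℝ (Fin d) → ℝ,
      ContDiff ℝ 1 u → HasCompactSupport u →
      (∫ z, |u z| ^ r) ^ (2 / r) ≤
        C * ((∫ z, wnS ε (‖z‖ ^ 2) ^ α * ‖fderiv ℝ u z‖ ^ 2) + ∫ z, u z ^ 2) := by
  have hd' : (2 : ℝ) ≤ d := by exact_mod_cast hd
  obtain ⟨D, hD⟩ : ∃ D : ℝ, D = d := ⟨_, rfl⟩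
  rw [← hD] at hr hd'
  have hX : 0 < D - 2 + 2 * α := by linarith
  have hS0 : 0 < 2 * (1 - α) * (D - 1) + α * D := by
    have : 0 < 1 - α := by linarith
    have : 0 < D - 1 := by linarith
    positivity
  have hr0 : 0 < r := by rw [hr]; positivity
  have hD1 : 0 < D - 1 := by linarith
  have hα1 : 0 < 1 - α := by linarith
  set p : ℝ := D / (D - 1) with hp
  set q : ℝ := r / 2 + 1 with hq
  set θ : ℝ := α * D / (2 * (1 - α) * (D - 1) + α * D) with hθ
  have hq1 : 1 < q := by linarith [hq, half_pos hr0]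
  have hp0 : 0 < p := by positivity
  have hθ0 : 0 < θ := by positivity
  have h1θ : 1 - θ = 2 * (1 - α) * (D - 1) / (2 * (1 - α) * (D - 1) + α * D) := by
    rw [hθ]; field_simp; ring
  have hθ1 : 0 < 1 - θ := by rw [h1θ]; positivity
  have hβe : (1 - θ) * p / 2 = (1 - α) * D / (2 * (1 - α) * (D - 1) + α * D) := by
    rw [h1θ, hp]; field_simp
  have hβ1 : (1 - θ) * p / 2 < 1 := by
    rw [hβe, div_lt_one hS0]; nlinarith
  have hrel : 2 / r * (θ + (1 - θ) * p / 2) = 1 - (1 - θ) * p / 2 := by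
    rw [hβe, hθ, hr]; field_simp; ring
  have hexp1 : (α - 1) * θ + α / 2 * p * (1 - θ) = 0 := by
    rw [h1θ, hθ, hp]; field_simp; ring
  have hexp2 : 2 * θ + q * p * (1 - θ) = r := by
    rw [h1θ, hθ, hp, hq, hr]; field_simp; ring
  have hconj : Real.HolderConjugate D p := by
    rw [Real.holderConjugate_iff]
    refine ⟨by linarith, ?_⟩
    rw [hp]; field_simp; ring
  obtain ⟨Cg, hCg, hgns⟩ := wn_gns (d := d) p (by rw [← hD]; exact hconj)
  set K1 : ℝ := 16 / α ^ 2 + 4 with hK1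
  set K2 : ℝ := 2 * α ^ 2 * K1 + 2 * q ^ 2 with hK2
  have hK1p : 0 < K1 := by positivity
  have hK2p : 0 < K2 := by positivity
  refine ⟨(K1 ^ θ * Cg ^ (1 - θ) * K2 ^ ((1 - θ) * p / 2)) ^ (1 / (θ + (1 - θ) * p / 2)),
    by positivity, fun ε hε hε1 u hu hc => ?_⟩
  have hu0 := hu.continuous
  have hud := hu.continuous_fderiv one_ne_zero
  have hSz : ∀ z : EuclideanSpace ℝ (Fin d), 0 < wnS ε (‖z‖ ^ 2) := fun z =>
    wnS_pos hε (by positivity)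
  have hSc : Continuous (fun z : EuclideanSpace ℝ (Fin d) => wnS ε (‖z‖ ^ 2)) := by
    unfold wnS
    exact Continuous.div (by fun_prop) (by fun_prop) (fun z => by positivity)
  have hSp : ∀ s : ℝ, Continuous (fun z : EuclideanSpace ℝ (Fin d) => wnS ε (‖z‖ ^ 2) ^ s) :=
    fun s => hSc.rpow_const (fun z => Or.inl (hSz z).ne')
  have hup : ∀ s : ℝ, 0 ≤ s → Continuous (fun z => |u z| ^ s) := fun s hs =>
    hu0.abs.rpow_const (fun z => Or.inr hs)
  have iA : Integrable (fun z => wnS ε (‖z‖ ^ 2) ^ (α - 1) * u z ^ 2) :=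
    wn_integrable hc ((hSp _).mul (by fun_prop)) (fun z hz => by
      simp [image_eq_zero_of_notMem_tsupport hz])
  have iD : Integrable (fun z => wnS ε (‖z‖ ^ 2) ^ α * ‖fderiv ℝ u z‖ ^ 2) :=
    wn_integrable hc ((hSp _).mul (by fun_prop)) (fun z hz => by simp [wn_fderiv_zero hz])
  have hDI : 0 ≤ ∫ z, wnS ε (‖z‖ ^ 2) ^ α * ‖fderiv ℝ u z‖ ^ 2 :=
    integral_nonneg fun z => mul_nonneg (Real.rpow_nonneg (hSz z).le _) (by positivity)
  have hMI : 0 ≤ ∫ z, u z ^ 2 := integral_nonneg fun z => by positivity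
  have hAI : 0 ≤ ∫ z, wnS ε (‖z‖ ^ 2) ^ (α - 1) * u z ^ 2 :=
    integral_nonneg fun z => mul_nonneg (Real.rpow_nonneg (hSz z).le _) (by positivity)
  set E := (∫ z, wnS ε (‖z‖ ^ 2) ^ α * ‖fderiv ℝ u z‖ ^ 2) + ∫ z, u z ^ 2 with hE
  set f : EuclideanSpace ℝ (Fin d) → ℝ := fun z => wnS ε (‖z‖ ^ 2) ^ (α / 2) * ‖u z‖ ^ q with hf
  have hf1 : ContDiff ℝ 1 f := wn_f_contDiff hε hq1 hu
  have hfc : HasCompactSupport f := HasCompactSupport.intro hc.isCompact (fun z hz => by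
    simp [hf, image_eq_zero_of_notMem_tsupport hz, (by linarith : q ≠ 0)])
  have hfn : ∀ z, 0 ≤ f z := fun z =>
    mul_nonneg (Real.rpow_nonneg (hSz z).le _) (by positivity)
  set h : EuclideanSpace ℝ (Fin d) → ℝ := fun z =>
    α * wnS ε (‖z‖ ^ 2) ^ ((α - 1) / 2) * |u z| +
        q * wnS ε (‖z‖ ^ 2) ^ (α / 2) * ‖fderiv ℝ u z‖ with hh
  have hhn : ∀ z, 0 ≤ h z := fun z => by
    have := Real.rpow_nonneg (hSz z).le ((α - 1) / 2)
    have := Real.rpow_nonneg (hSz z).le (α / 2)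
    simp only [hh]
    positivity
  have hhc : Continuous h := by
    have := hSp ((α - 1) / 2)
    have := hSp (α / 2)
    simp only [hh]
    fun_prop
  have hhs : HasCompactSupport h := HasCompactSupport.intro hc.isCompact (fun z hz => by
    simp [hh, image_eq_zero_of_notMem_tsupport hz, wn_fderiv_zero hz])
  have hrs : HasCompactSupport (fun z => |u z| ^ (r / 2)) :=
    HasCompactSupport.intro hc.isCompact (fun z hz => by
      simp [image_eq_zero_of_notMem_tsupport hz, (by linarith : r / 2 ≠ 0)])
  have hhsq : ∀ z, h z ^ (2 : ℝ) ≤ 2 * α ^ 2 * (wnS ε (‖z‖ ^ 2) ^ (α - 1) * u z ^ 2) +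
      2 * q ^ 2 * (wnS ε (‖z‖ ^ 2) ^ α * ‖fderiv ℝ u z‖ ^ 2) := by
    intro z
    have e1 : wnS ε (‖z‖ ^ 2) ^ (α - 1) = (wnS ε (‖z‖ ^ 2) ^ ((α - 1) / 2)) ^ 2 := by
      rw [← Real.rpow_mul_natCast (hSz z).le]; norm_num
    have e2 : wnS ε (‖z‖ ^ 2) ^ α = (wnS ε (‖z‖ ^ 2) ^ (α / 2)) ^ 2 := by
      rw [← Real.rpow_mul_natCast (hSz z).le]; norm_num
    rw [Real.rpow_two, e1, e2, ← sq_abs (u z)]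
    simp only [hh]
    nlinarith [sq_nonneg (α * wnS ε (‖z‖ ^ 2) ^ ((α - 1) / 2) * |u z| -
        q * wnS ε (‖z‖ ^ 2) ^ (α / 2) * ‖fderiv ℝ u z‖)]
  have a1 : ∫ z, wnS ε (‖z‖ ^ 2) ^ (α - 1) * u z ^ 2 ≤ K1 * E := by
    have := wn_hardy hd h0 h1 hε hu hc
    have h2 : α * (∫ z, wnS ε (‖z‖ ^ 2) ^ (α - 1) * u z ^ 2) ≤ α * (K1 * E) := by
      refine this.trans ?_
      rw [hK1, hE]
      have : α * ((16 / α ^ 2 + 4) * ((∫ z, wnS ε (‖z‖ ^ 2) ^ α * ‖fderiv ℝ u z‖ ^ 2)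
        + ∫ z, u z ^ 2)) = 16 / α * (∫ z, wnS ε (‖z‖ ^ 2) ^ α * ‖fderiv ℝ u z‖ ^ 2)
        + 4 * α * (∫ z, u z ^ 2) + (4 * α * (∫ z, wnS ε (‖z‖ ^ 2) ^ α * ‖fderiv ℝ u z‖ ^ 2)
          + 16 / α * ∫ z, u z ^ 2) := by field_simp; ring
      rw [this]
      have : 0 ≤ (4 * α * (∫ z, wnS ε (‖z‖ ^ 2) ^ α * ‖fderiv ℝ u z‖ ^ 2)
          + 16 / α * ∫ z, u z ^ 2) := by positivity
      linarith
    exact le_of_mul_le_mul_left h2 h0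
  have a2 := hgns f hf1 hfc hfn
  have a4 : ∫ z, h z ^ (2 : ℝ) ≤ K2 * E := by
    have i : Integrable (fun z => h z ^ (2 : ℝ)) :=
      wn_integrable hhs (hhc.rpow_const (fun _ => Or.inr (by norm_num)))
        (fun z hz => by simp [image_eq_zero_of_notMem_tsupport hz])
    have := integral_mono i ((iA.const_mul (2 * α ^ 2)).add (iD.const_mul (2 * q ^ 2))) hhsq
    simp only [Pi.add_apply] at this
    rw [integral_add (iA.const_mul (2 * α ^ 2)) (iD.const_mul (2 * q ^ 2)),
      integral_const_mul, integral_const_mul] at this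
    refine this.trans ?_
    rw [hK2, add_mul, mul_assoc (2 * α ^ 2)]
    gcongr
    linarith
  have a3 : ∫ z, ‖fderiv ℝ f z‖ ≤
      (∫ z, |u z| ^ r) ^ (1 / 2 : ℝ) * (∫ z, h z ^ (2 : ℝ)) ^ (1 / 2 : ℝ) := by
    have c1 : ∫ z, ‖fderiv ℝ f z‖ ≤ ∫ z, |u z| ^ (r / 2) * h z := by
      apply integral_mono
      · exact ((hf1.continuous_fderiv one_ne_zero).integrable_of_hasCompactSupport
          (hfc.fderiv ℝ)).norm
      · exact wn_integrable hhs ((hup _ (by positivity)).mul hhc)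
          (fun z hz => by simp [image_eq_zero_of_notMem_tsupport hz])
      · intro z
        have := wn_f_bound h0 hε hε1 hq1 hu z
        have e : q - 1 = r / 2 := by rw [hq]; ring
        rw [e] at this
        exact this
    have c2 := integral_mul_le_Lp_mul_Lq_of_nonneg (μ := volume) (p := 2) (q := 2)
      Real.HolderConjugate.two_two
      (f := fun z => |u z| ^ (r / 2)) (g := h)
      (Filter.Eventually.of_forall fun z => by positivity)
      (Filter.Eventually.of_forall hhn)
      ((hup _ (by positivity)).memLp_of_hasCompactSupport hrs)
      (hhc.memLp_of_hasCompactSupport hhs)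
    have e : ∀ z, (|u z| ^ (r / 2)) ^ (2 : ℝ) = |u z| ^ r := fun z => by
      rw [← Real.rpow_mul (abs_nonneg _)]; ring_nf
    simp only [e] at c2
    exact c1.trans c2
  have a5 : ∫ z, |u z| ^ r ≤
      (∫ z, wnS ε (‖z‖ ^ 2) ^ (α - 1) * u z ^ 2) ^ θ * (∫ z, f z ^ p) ^ (1 - θ) := by
    have hfcont := hf1.continuous
    have hconj2 : Real.HolderConjugate (1 / θ) (1 / (1 - θ)) := by
      rw [Real.holderConjugate_iff]
      refine ⟨?_, by simp⟩
      rw [lt_div_iff₀ hθ0]; linarith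
    have hAn : ∀ z, 0 ≤ wnS ε (‖z‖ ^ 2) ^ (α - 1) * u z ^ 2 := fun z =>
      mul_nonneg (Real.rpow_nonneg (hSz z).le _) (by positivity)
    have hBn : ∀ z, 0 ≤ f z ^ p := fun z => Real.rpow_nonneg (hfn z) _
    have c2 := integral_mul_le_Lp_mul_Lq_of_nonneg (μ := volume) hconj2
      (f := fun z => (wnS ε (‖z‖ ^ 2) ^ (α - 1) * u z ^ 2) ^ θ) (g := fun z => (f z ^ p) ^ (1 - θ))
      (Filter.Eventually.of_forall fun z => Real.rpow_nonneg (hAn z) _)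
      (Filter.Eventually.of_forall fun z => Real.rpow_nonneg (hBn z) _)
      (Continuous.memLp_of_hasCompactSupport
        (((hSp _).mul (hu0.pow 2)).rpow_const (fun _ => Or.inr hθ0.le))
        (HasCompactSupport.intro hc.isCompact (fun z hz => by
          simp [image_eq_zero_of_notMem_tsupport hz, hθ0.ne'])))
      (Continuous.memLp_of_hasCompactSupport
        ((hfcont.rpow_const (fun _ => Or.inr hp0.le)).rpow_const (fun _ => Or.inr hθ1.le))
        (HasCompactSupport.intro hfc.isCompact (fun z hz => by
          simp [image_eq_zero_of_notMem_tsupport hz, hθ1.ne', hp0.ne'])))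
    have e1 : ∀ z, ((wnS ε (‖z‖ ^ 2) ^ (α - 1) * u z ^ 2) ^ θ) ^ (1 / θ) =
        wnS ε (‖z‖ ^ 2) ^ (α - 1) * u z ^ 2 := fun z => by
      rw [← Real.rpow_mul (hAn z), mul_one_div_cancel hθ0.ne', Real.rpow_one]
    have e2 : ∀ z, ((f z ^ p) ^ (1 - θ)) ^ (1 / (1 - θ)) = f z ^ p := fun z => by
      rw [← Real.rpow_mul (hBn z), mul_one_div_cancel hθ1.ne', Real.rpow_one]
    have e3 : ∀ z, (wnS ε (‖z‖ ^ 2) ^ (α - 1) * u z ^ 2) ^ θ * (f z ^ p) ^ (1 - θ) =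
        |u z| ^ r := fun z => by
      have hs := hSz z
      have hu2 : u z ^ 2 = |u z| ^ (2 : ℝ) := by rw [Real.rpow_two, sq_abs]
      simp only [hf, Real.norm_eq_abs]
      rw [hu2, Real.mul_rpow (by positivity) (by positivity),
        Real.mul_rpow (by positivity) (by positivity),
        Real.mul_rpow (by positivity) (by positivity)]
      simp only [← Real.rpow_mul hs.le, ← Real.rpow_mul (abs_nonneg (u z))]
      calc _ = (wnS ε (‖z‖ ^ 2) ^ ((α - 1) * θ) * wnS ε (‖z‖ ^ 2) ^ (α / 2 * p * (1 - θ))) *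
            (|u z| ^ (2 * θ) * |u z| ^ (q * p * (1 - θ))) := by ring
        _ = _ := by
          rw [← Real.rpow_add hs, hexp1, Real.rpow_zero, one_mul,
            ← Real.rpow_add_of_nonneg (abs_nonneg _) (by positivity) (by positivity), hexp2]
    simp only [e1, e2, e3, one_div_one_div] at c2
    exact c2
  exact wn_final hAI (integral_nonneg fun z => Real.rpow_nonneg (hfn z) _)
    (integral_nonneg fun z => norm_nonneg _)
    (integral_nonneg fun z => Real.rpow_nonneg (hhn z) _)
    (integral_nonneg fun z => by positivity) (by positivity) hK1p hK2p hCg hp0 hθ0 (by linarith) rfl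
    hβ1 hr0 hrel a1 a2 a3 a4 a5

lemma wn_S_le {ε t α : ℝ} (hε : 0 < ε) (ht : 0 ≤ t) (h0 : 0 < α) (h1 : α < 1) :
    wnS ε (t ^ 2) ^ α ≤ min 1 (t ^ (2 * α)) + ε ^ α := by
  have ht2 : 0 ≤ t ^ 2 := by positivity
  have h2 : 0 < 1 + t ^ 2 := by positivity
  have a : wnS ε (t ^ 2) ≤ min 1 (t ^ 2) + ε := by
    unfold wnS
    rw [div_le_iff₀ h2]
    rcases le_total 1 (t ^ 2) with h | h
    · rw [min_eq_left h]; nlinarith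
    · rw [min_eq_right h]; nlinarith
  have hm : 0 ≤ min 1 (t ^ 2) := le_min zero_le_one ht2
  calc _ ≤ (min 1 (t ^ 2) + ε) ^ α := by
        have := (wnS_pos hε ht2).le
        gcongr
    _ ≤ (min 1 (t ^ 2)) ^ α + ε ^ α := Real.rpow_add_le_add_rpow hm hε.le h0.le h1.le
    _ ≤ _ := by
        gcongr
        apply le_min
        · exact Real.rpow_le_one hm (min_le_left _ _) h0.le
        · rw [Real.rpow_mul ht, Real.rpow_two]
          exact Real.rpow_le_rpow hm (min_le_right _ _) h0.le

/-- Weighted Nash–Sobolev inequality with weight degenerating like `|z|^{2α}` at the origin: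
for `γ = d/(1−α)` and `r = 2γ/(γ−2)` there is `C = C(d,α)` such that for every
`G ∈ C_c^∞(ℝ^d)`,
`‖G‖²_{L^r} ≤ C ( ∫ min(1,|z|^{2α}) |∇G(z)|² dz + ‖G‖²_{L²} )`. -/
theorem weighted_nash_inequality (d : ℕ) (hd : 2 ≤ d) (α : ℝ) (hα : α ∈ Set.Ioo (0:ℝ) 1)
    (γ r : ℝ) (hγ : γ = d / (1 - α)) (hr : r = 2 * γ / (γ - 2)) :
    ∃ C : ℝ, 0 < C ∧
      ∀ G : EuclideanSpace ℝ (Fin d) → ℝ,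
        ContDiff ℝ (⊤ : ℕ∞) G → HasCompactSupport G →
        (∫ z, |G z| ^ r) ^ (2 / r) ≤
          C * ((∫ z, min 1 (‖z‖ ^ (2*α)) * ‖fderiv ℝ G z‖ ^ 2) + ∫ z, G z ^ 2) := by
  obtain ⟨h0, h1⟩ := hα
  have hd' : (2 : ℝ) ≤ d := by exact_mod_cast hd
  have hr' : r = 2 * d / (d - 2 + 2 * α) := by
    have e1 : (d : ℝ) - 2 + 2 * α ≠ 0 := by
      have : 0 < (d : ℝ) - 2 + 2 * α := by linarith
      exact this.ne'
    have e2 : 1 - α ≠ 0 := by linarith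
    have e3 : γ - 2 = (d - 2 + 2 * α) / (1 - α) := by rw [hγ]; field_simp; ring
    rw [hr, e3, hγ]
    field_simp
  obtain ⟨C, hC, hcore⟩ := wn_core hd h0 h1 hr'
  refine ⟨C, hC, fun G hG hc => ?_⟩
  have hG1 : ContDiff ℝ 1 G := hG.of_le (by exact_mod_cast le_top)
  have hG0 := hG1.continuous
  have hGd := hG1.continuous_fderiv one_ne_zero
  have iT : Integrable (fun z => ‖fderiv ℝ G z‖ ^ 2) :=
    wn_integrable hc (by fun_prop) (fun z hz => by simp [wn_fderiv_zero hz])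
  have iW : Integrable (fun z => min 1 (‖z‖ ^ (2*α)) * ‖fderiv ℝ G z‖ ^ 2) :=
    wn_integrable hc ((continuous_const.min
      (continuous_norm.rpow_const (fun _ => Or.inr (by positivity)))).mul (by fun_prop))
      (fun z hz => by simp [wn_fderiv_zero hz])
  have step : ∀ ε : ℝ, 0 < ε → ε ≤ 1 → (∫ z, |G z| ^ r) ^ (2 / r) ≤
      C * ((∫ z, min 1 (‖z‖ ^ (2*α)) * ‖fderiv ℝ G z‖ ^ 2) +
        ε ^ α * (∫ z, ‖fderiv ℝ G z‖ ^ 2) + ∫ z, G z ^ 2) := by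
    intro ε hε hε1
    refine (hcore ε hε hε1 G hG1 hc).trans ?_
    gcongr
    rw [← integral_const_mul, ← integral_add iW (iT.const_mul _)]
    apply integral_mono_of_nonneg
    · exact Filter.Eventually.of_forall fun z =>
        mul_nonneg (Real.rpow_nonneg (wnS_pos hε (by positivity)).le _) (by positivity)
    · exact iW.add (iT.const_mul _)
    · refine Filter.Eventually.of_forall fun z => ?_
      have := mul_le_mul_of_nonneg_right (wn_S_le hε (norm_nonneg z) h0 h1)
        (sq_nonneg ‖fderiv ℝ G z‖)
      simp only
      linarith
  have hlim : Filter.Tendsto (fun ε : ℝ => C * ((∫ z, min 1 (‖z‖ ^ (2*α)) * ‖fderiv ℝ G z‖ ^ 2) +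
        ε ^ α * (∫ z, ‖fderiv ℝ G z‖ ^ 2) + ∫ z, G z ^ 2)) (nhdsWithin 0 (Set.Ioi 0))
      (nhds (C * ((∫ z, min 1 (‖z‖ ^ (2*α)) * ‖fderiv ℝ G z‖ ^ 2) + ∫ z, G z ^ 2))) := by
    have hcont : Continuous (fun ε : ℝ => C * ((∫ z, min 1 (‖z‖ ^ (2*α)) * ‖fderiv ℝ G z‖ ^ 2) +
        ε ^ α * (∫ z, ‖fderiv ℝ G z‖ ^ 2) + ∫ z, G z ^ 2)) := by
      have := Real.continuous_rpow_const (q := α) h0.le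
      fun_prop
    have := (hcont.tendsto 0).mono_left (nhdsWithin_le_nhds (s := Set.Ioi 0))
    simpa [Real.zero_rpow h0.ne'] using this
  refine ge_of_tendsto hlim ?_
  filter_upwards [Ioc_mem_nhdsGT (zero_lt_one (α := ℝ))] with ε hε
  exact step ε hε.1 hε.2
end

section
/- Let d ≥ 1 and let A be a subalgebra (not assumed to contain the constants) of the algebra C₀(ℝ^d; ℝ) of continuous real functions vanishing at infinity. Suppose there exists f ∈ C₀(ℝ^d; ℝ) with f(x) > 0 for every x ∈ ℝ^d such that for every l ∈ ℝ^d the translate x ↦ f(x+l) belongs to A. Then A is dense in C₀(ℝ^d; ℝ) for the uniform norm. -/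
open scoped ZeroAtInfty

section aux

variable {X : Type*} [TopologicalSpace X]

/-- Extension of a `C₀` function by zero at infinity. -/
noncomputable def extendZero [T2Space X] (g : C₀(X, ℝ)) : C(OnePoint X, ℝ) :=
  OnePoint.continuousMapMk (g : C(X, ℝ)) 0
    (by simpa [Filter.coclosedCompact_eq_cocompact] using g.zero_at_infty')

/-- Functions on the compactification which are an element of `A` plus a constant. -/
def unitized (A : NonUnitalSubalgebra ℝ C₀(X, ℝ)) : Subalgebra ℝ C(OnePoint X, ℝ) where
  carrier := {h | ∃ a ∈ A, ∀ x : X, h x = a x + h OnePoint.infty}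
  mul_mem' := by
    rintro h k ⟨a, ha, hh⟩ ⟨b, hb, hk⟩
    refine ⟨a * b + (k OnePoint.infty • a + h OnePoint.infty • b),
      add_mem (mul_mem ha hb) (add_mem (A.smul_mem _ ha) (A.smul_mem _ hb)), fun x => ?_⟩
    simp only [ContinuousMap.mul_apply, hh x, hk x, ZeroAtInftyContinuousMap.coe_add,
      ZeroAtInftyContinuousMap.coe_mul, ZeroAtInftyContinuousMap.coe_smul, Pi.add_apply,
      Pi.mul_apply, Pi.smul_apply, smul_eq_mul]
    ring
  add_mem' := by
    rintro h k ⟨a, ha, hh⟩ ⟨b, hb, hk⟩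
    refine ⟨a + b, add_mem ha hb, fun x => ?_⟩
    simp only [ContinuousMap.add_apply, hh x, hk x, ZeroAtInftyContinuousMap.coe_add, Pi.add_apply]
    ring
  algebraMap_mem' := fun r => ⟨0, zero_mem A, fun x => by simp⟩

theorem dense_of_separates [T2Space X] (A : NonUnitalSubalgebra ℝ C₀(X, ℝ))
    (hne : ∀ x, ∃ a ∈ A, a x ≠ 0) (hsep : ∀ x y, x ≠ y → ∃ a ∈ A, a x ≠ a y) :
    Dense (A : Set C₀(X, ℝ)) := by
  have hmem : ∀ a ∈ A, extendZero a ∈ unitized A := fun a ha =>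
    ⟨a, ha, fun x => (add_zero (a x)).symm⟩
  have w : (unitized A).SeparatesPoints := by
    intro p q hpq
    induction p using OnePoint.rec with
    | infty =>
      induction q using OnePoint.rec with
      | infty => exact absurd rfl hpq
      | coe y =>
        obtain ⟨a, ha, h⟩ := hne y
        exact ⟨_, ⟨extendZero a, hmem a ha, rfl⟩, fun e => h (Eq.symm e)⟩
    | coe x =>
      induction q using OnePoint.rec with
      | infty =>
        obtain ⟨a, ha, h⟩ := hne x
        exact ⟨_, ⟨extendZero a, hmem a ha, rfl⟩, h⟩
      | coe y =>
        obtain ⟨a, ha, h⟩ := hsep x y (fun e => hpq (by rw [e]))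
        exact ⟨_, ⟨extendZero a, hmem a ha, rfl⟩, h⟩
  rw [Metric.dense_iff]
  intro g ε hε
  obtain ⟨⟨h, a, ha, hh⟩, hlt⟩ :=
    ContinuousMap.exists_mem_subalgebra_near_continuousMap_of_separatesPoints
      (unitized A) w (extendZero g) (ε / 3) (by positivity)
  refine ⟨a, ?_, ha⟩
  rw [Metric.mem_ball, ← ZeroAtInftyContinuousMap.dist_toBCF_eq_dist]
  refine lt_of_le_of_lt ((BoundedContinuousFunction.dist_le (C := ε / 3 + ε / 3)
    (by positivity)).2 fun x => ?_) (by linarith)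
  have h1 : |h x - g x| < ε / 3 := lt_of_le_of_lt ((h - extendZero g).norm_coe_le_norm x) hlt
  have h2 : |h OnePoint.infty - 0| < ε / 3 :=
    lt_of_le_of_lt ((h - extendZero g).norm_coe_le_norm OnePoint.infty) hlt
  change |a x - g x| ≤ _
  rw [hh x] at h1
  rw [abs_lt] at h1 h2
  rw [abs_le]
  constructor <;> linarith [h1.1, h1.2, h2.1, h2.2]

end aux

/-- Stone–Weierstrass-type density: a (not necessarily unital) subalgebra of `C₀(ℝ^d; ℝ)`
containing all translates of some everywhere-positive function `f ∈ C₀(ℝ^d; ℝ)` is dense. -/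
theorem translates_dense (d : ℕ) (hd : 1 ≤ d)
    (A : NonUnitalSubalgebra ℝ (ZeroAtInftyContinuousMap (EuclideanSpace ℝ (Fin d)) ℝ))
    (f : ZeroAtInftyContinuousMap (EuclideanSpace ℝ (Fin d)) ℝ)
    (hfpos : ∀ x, 0 < f x)
    (htrans : ∀ l : EuclideanSpace ℝ (Fin d), ∃ g ∈ A, ∀ x, g x = f (x + l)) :
    Dense (A : Set (ZeroAtInftyContinuousMap (EuclideanSpace ℝ (Fin d)) ℝ)) := by
  apply dense_of_separates
  · intro x
    obtain ⟨g, hg, h⟩ := htrans 0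
    exact ⟨g, hg, by rw [h]; exact (hfpos _).ne'⟩
  · intro x y hxy
    by_contra! hcon
    have hper : ∀ l, f (l + (x - y)) = f l := by
      intro l
      obtain ⟨g, hg, h⟩ := htrans (l - y)
      have := hcon g hg
      rw [h, h] at this
      convert this using 2 <;> abel
    have hn : ∀ n : ℕ, f ((n : ℝ) • (x - y)) = f 0 := by
      intro n
      induction n with
      | zero => simp
      | succ n ih => rw [← ih, Nat.cast_succ, add_smul, one_smul, hper]
    have ht : Filter.Tendsto (fun n : ℕ => (n : ℝ) • (x - y)) Filter.atTop
        (Filter.cocompact (EuclideanSpace ℝ (Fin d))) := by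
      rw [← Metric.cobounded_eq_cocompact, ← tendsto_norm_atTop_iff_cobounded]
      simp only [norm_smul, Real.norm_natCast]
      exact tendsto_natCast_atTop_atTop.atTop_mul_const (norm_pos_iff.2 (sub_ne_zero.2 hxy))
    have h0 := f.zero_at_infty'.comp ht
    have h1 : Filter.Tendsto (fun _ : ℕ => f 0) Filter.atTop (nhds 0) :=
      h0.congr fun n => hn n
    exact (hfpos 0).ne' (tendsto_nhds_unique tendsto_const_nhds h1)
end

section
/- Let d ≥ 1 be an integer and α ∈ (0,1). There exists a constant c > 0 such that for every r > 0: ∫₀^∞ (1 − cos(r y)) · y^{d−1} · (y² + 1)^{−d/2−α} dy ≥ c · r^{2α} · (1 + r²)^{−d/2−α}. -/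
open MeasureTheory

lemma kraichnan_integrable (d : ℕ) (hd : 1 ≤ d) (α : ℝ) (hα : 0 < α) (r : ℝ) :
    IntegrableOn (fun y : ℝ =>
      (1 - Real.cos (r * y)) * y ^ (d-1) * (y^2 + 1) ^ (-(d:ℝ)/2 - α)) (Set.Ioi 0) := by
  have h1 : Integrable (fun y : ℝ => (1 + ‖y‖^2) ^ (-(1 + 2*α)/2)) :=
    integrable_rpow_neg_one_add_norm_sq (by simp; linarith)
  have h2 := (h1.const_mul 2).integrableOn (s := Set.Ioi (0:ℝ))
  refine Integrable.mono' h2 ?_ ?_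
  · refine Continuous.aestronglyMeasurable ?_
    refine Continuous.mul (by fun_prop) ?_
    refine Continuous.rpow_const (by fun_prop) ?_
    intro y; left; positivity
  · refine (ae_restrict_iff' measurableSet_Ioi).2 (Filter.Eventually.of_forall ?_)
    intro y hy
    have hy0 : (0:ℝ) < y := hy
    have hp : (0:ℝ) < y^2 + 1 := by positivity
    have hc0 : 0 ≤ 1 - Real.cos (r*y) := by linarith [Real.cos_le_one (r*y)]
    have hc2 : 1 - Real.cos (r*y) ≤ 2 := by linarith [Real.neg_one_le_cos (r*y)]
    have hyd : y ^ (d-1) ≤ (y^2+1) ^ (((d:ℝ)-1)/2) := by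
      have : y ^ (d-1) = (y^2) ^ (((d:ℝ)-1)/2) := by
        rw [← Real.rpow_natCast y 2, ← Real.rpow_mul hy0.le, ← Real.rpow_natCast]
        congr 1
        push_cast [Nat.cast_sub hd]; ring
      rw [this]
      have : (1:ℝ) ≤ d := by exact_mod_cast hd
      exact Real.rpow_le_rpow (by positivity) (by linarith) (by linarith)
    rw [Real.norm_of_nonneg (by positivity)]
    calc _ ≤ 2 * (y^2+1) ^ (((d:ℝ)-1)/2) * (y^2 + 1) ^ (-(d:ℝ)/2 - α) := by gcongr
      _ = _ := by
        rw [mul_assoc, ← Real.rpow_add hp, Real.norm_eq_abs, sq_abs, add_comm (1:ℝ) (y^2)]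
        congr 2; ring

/-- Nondegeneracy of the Kraichnan covariance: for `d ≥ 1` and `α ∈ (0,1)` there is `c > 0`
such that for all `r > 0`,
`∫₀^∞ (1 − cos(ry)) y^{d−1} (y²+1)^{−d/2−α} dy ≥ c r^{2α} (1+r²)^{−d/2−α}`. -/
theorem kraichnan_oscillatory_lower_bound (d : ℕ) (hd : 1 ≤ d) (α : ℝ)
    (hα : α ∈ Set.Ioo (0:ℝ) 1) :
    ∃ c : ℝ, 0 < c ∧ ∀ r : ℝ, 0 < r →
      c * r ^ (2*α) * (1 + r^2) ^ (-(d:ℝ)/2 - α) ≤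
        ∫ y in Set.Ioi (0:ℝ),
          (1 - Real.cos (r * y)) * y ^ (d-1) * (y^2 + 1) ^ (-(d:ℝ)/2 - α) := by
  obtain ⟨hα0, -⟩ := hα
  have hk : 0 < 1 - Real.cos 1 := by
    have := Real.cos_one_le
    linarith
  refine ⟨(1 - Real.cos 1) * 4 ^ (-(d:ℝ)/2 - α), by positivity, ?_⟩
  intro r hr
  have hint := kraichnan_integrable d hd α hα0 r
  have hsub : Set.Ioc (1/r) (2/r) ⊆ Set.Ioi (0:ℝ) := fun y hy =>
    lt_trans (by positivity : (0:ℝ) < 1/r) hy.1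
  have hmono := setIntegral_mono_set hint
    ((ae_restrict_iff' measurableSet_Ioi).2 (Filter.Eventually.of_forall (by
      intro y hy
      have hy0 : (0:ℝ) < y := hy
      have hc0 : 0 ≤ 1 - Real.cos (r*y) := by linarith [Real.cos_le_one (r*y)]
      simp only [Pi.zero_apply]
      positivity))) hsub.eventuallyLE
  refine le_trans ?_ hmono
  set p : ℝ := -(d:ℝ)/2 - α with hp
  have hp0 : p ≤ 0 := by
    have : (0:ℝ) ≤ d := by positivity
    linarith
  have hconst : ∫ y in Set.Ioc (1/r) (2/r),
      (1 - Real.cos 1) * (1/r)^(d-1) * (4 * (1+r^2) / r^2) ^ p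
      = (1 - Real.cos 1) * 4 ^ p * r ^ (2*α) * (1 + r^2) ^ p := by
    have e1 : (4 * (1+r^2) / r^2) ^ p = 4 ^ p * (1+r^2)^p * (r ^ (d:ℝ) * r ^ (2*α)) := by
      rw [Real.div_rpow (by positivity) (by positivity), Real.mul_rpow (by norm_num) (by positivity),
        div_eq_mul_inv, ← Real.rpow_neg (by positivity), ← Real.rpow_natCast r 2,
        ← Real.rpow_mul hr.le, ← Real.rpow_add hr]
      congr 2
      rw [hp]; push_cast; ring
    have e2 : (1/r)^(d-1) * r ^ (d:ℝ) = r := by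
      obtain ⟨n, rfl⟩ : ∃ n, d = n + 1 := ⟨d - 1, by omega⟩
      rw [Real.rpow_natCast, Nat.add_sub_cancel, pow_succ, ← mul_assoc, ← mul_pow,
        one_div_mul_cancel hr.ne', one_pow, one_mul]
    have e3 : volume.real (Set.Ioc (1/r) (2/r)) = 1/r := by
      rw [Real.volume_real_Ioc_of_le (by gcongr; norm_num)]; ring
    rw [setIntegral_const, e3, e1, smul_eq_mul]
    calc _ = (1/r) * ((1/r)^(d-1) * r ^ (d:ℝ)) * ((1 - Real.cos 1) * 4 ^ p * r ^ (2*α) * (1 + r^2) ^ p) := by ring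
      _ = _ := by rw [e2, one_div_mul_cancel hr.ne', one_mul]
  rw [← hconst]
  refine setIntegral_mono_on (integrableOn_const measure_Ioc_lt_top.ne) (hint.mono_set hsub) measurableSet_Ioc ?_
  intro y hy
  have hy0 : 0 < y := hsub hy
  have h1 : 1 ≤ r * y := by
    have := hy.1.le
    rw [div_le_iff₀ hr] at this; linarith
  have h2 : r * y ≤ 2 := by
    have := hy.2
    rw [le_div_iff₀ hr] at this; linarith
  have hcos : Real.cos (r*y) ≤ Real.cos 1 :=
    Real.cos_le_cos_of_nonneg_of_le_pi (by norm_num) (by linarith [Real.pi_gt_three]) h1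
  have hpow : (1/r)^(d-1) ≤ y^(d-1) := by
    have := hy.1.le
    gcongr
  have hlast : (4 * (1+r^2) / r^2) ^ p ≤ (y^2+1)^p := by
    refine Real.rpow_le_rpow_of_nonpos (by positivity) ?_ hp0
    rw [le_div_iff₀ (by positivity)]
    nlinarith [mul_pos hr hy0, sq_nonneg r]
  have hc0 : 0 ≤ 1 - Real.cos (r*y) := by linarith [Real.cos_le_one (r*y)]
  gcongr
end
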